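/- arXiv:2207.10272 — 2 statements merged into one kernel-verified Lean document; each statement's English description precedes it below -/
import Mathlib

section
/- Let −3 < γ ≤ 1, k ∈ ℝ, a > 0 and b ∈ (0,2). Then there exists a constant C_{k,a,b} > 0 such that for all measurable f : ℝ³ → ℝ for which all integrals below converge absolutely, |∫_{ℝ³} Q^+(μ, f)(v) f(v) ⟨v⟩^{2k} e^{2a⟨v⟩^b} dv| + |∫_{ℝ³} Q^+(f, μ)(v) f(v) ⟨v⟩^{2k} e^{2a⟨v⟩^b} dv| ≤ C_{k,a,b} ‖f‖_{L²_{k+γ/2, a, b}} ‖f‖_{L²_{k+γ/2−b(γ+3)/4, a, b}}. -/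
/-!
Write `wt v = ⟨v⟩^k e^{a⟨v⟩^b}` and `F = |f| wt`. Both terms are bounded by
`C ∫ F(v)² ⟨v⟩^{γ-b} dv`. Since `(γ+3)/4 ≤ 1` and `⟨v⟩ ≥ 1`, this is at most
`C ∫ F(v)² ⟨v⟩^{γ-b(γ+3)/4} dv`, and Cauchy–Schwarz gives the product of the two norms.

*Weights.* Let `m` be the velocity at which the Maxwellian is evaluated and `q` the velocity at
which `f` is evaluated, so that `{m, q} = {v', v*'}`. Energy conservation,
`|v|² + |v*|² = |q|² + |m|²`, together with `|v* - m|² ≥ s |q - m|²`, bounds `⟨v⟩^b` by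
`(1 - bs/8) ⟨q⟩^b + 3 ⟨m⟩^b` (`jap_rpow_drop`; concavity of `t ↦ t^{b/2}`). As `b < 2`, the
Maxwellian absorbs every factor `e^{c⟨m⟩^b}` and every power of `⟨m⟩`. Hence
`μ(m) wt(v) / wt(q)` is at most a constant times `⟨m⟩^{-8} e^{-c⟨x⟩^b s}` with `x ∈ {v, q}`
(`weight_grazing`). When `s ≥ 1/2` it is at most a constant times `(⟨q⟩⟨m⟩)^{-16}`
(`weight_wide`).

*The term `Q⁺(f, μ)`.* Here `s = (1 + cos θ)/2 ≥ 1/2` on the support of the kernel, so the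
integrand decays in all velocities. After `F(v) F(v*') ≤ F(v)² + F(v*')²` and the
pre-post-collisional change of variables (`prepost`), what remains is the convolution estimate
`∫ |v - w|^γ ⟨w⟩^{-8} dw ≤ C ⟨v⟩^γ` (`conv_bound`).

*The term `Q⁺(μ, f)`.* Here `s = (1 - cos θ)/2` vanishes for grazing collisions. The gain
`⟨v⟩^{-b}` comes from the sphere integral `∫ e^{-κ(1 - ω·σ)} dσ ≤ C/κ` with `κ` proportional to
`⟨v⟩^b` (`sphere_exp_bound'`). After `F(v) F(v') ≤ F(v)² + F(v')²`, the part with `F(v')²` is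
handled by `prepost`. In the part with `F(v)²` the decay is in `v*'`, and for fixed `σ` one
substitutes `y = v - v*' = (u + |u|σ)/2`, `u = v - v*` (`halfMap`), whose Jacobian is at least
`1/8` on `u·σ ≥ 0` (`lintegral_halfMap_le`).

All integrals are estimated as lower Lebesgue integrals of absolute values, so Fubini's theorem
and the changes of variables need no integrability.
-/

open MeasureTheory Real
open scoped ENNReal RealInnerProductSpace Classical

noncomputable section

/-- velocity space ℝ³ -/
abbrev E3 : Type := EuclideanSpace ℝ (Fin 3)

/-- the unit sphere 𝕊² ⊆ ℝ³ -/
abbrev S2 : Type := Metric.sphere (0 : E3) 1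

/-- surface measure on the unit sphere -/
noncomputable instance : MeasureSpace S2 := ⟨(volume : Measure E3).toSphere⟩

/-- Japanese bracket ⟨v⟩ = √(1+|v|²). -/
def jap (v : E3) : ℝ := Real.sqrt (1 + ‖v‖ ^ 2)

/-- Post-collision velocity v' = (v+v*)/2 + (|v-v*|/2)σ. -/
def vP (v w : E3) (σ : S2) : E3 := (2⁻¹ : ℝ) • (v + w) + (‖v - w‖ / 2) • (σ : E3)

/-- Post-collision velocity v*' = (v+v*)/2 - (|v-v*|/2)σ. -/
def vsP (v w : E3) (σ : S2) : E3 := (2⁻¹ : ℝ) • (v + w) - (‖v - w‖ / 2) • (σ : E3)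

/-- cos θ = ((v-v*)/|v-v*|)·σ. -/
def cosTheta (v w : E3) (σ : S2) : ℝ := ⟪v - w, (σ : E3)⟫ / ‖v - w‖

/-- sin(θ/2) = √((1-cos θ)/2). -/
def sinHalf (v w : E3) (σ : S2) : ℝ := Real.sqrt ((1 - cosTheta v w σ) / 2)

/-- cos(θ/2) = √((1+cos θ)/2). -/
def cosHalf (v w : E3) (σ : S2) : ℝ := Real.sqrt ((1 + cosTheta v w σ) / 2)

/-- a fixed reference unit direction, used to express rotation-invariant angular integrals -/
def e1 : E3 := EuclideanSpace.single 0 1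

/-- cos θ for the deviation angle of σ relative to the fixed direction `e1` -/
def cos1 (σ : S2) : ℝ := ⟪e1, (σ : E3)⟫

def sinHalf1 (σ : S2) : ℝ := Real.sqrt ((1 - cos1 σ) / 2)

def cosHalf1 (σ : S2) : ℝ := Real.sqrt ((1 + cos1 σ) / 2)

/-- the standard Maxwellian μ(v) = (2π)^{-3/2} e^{-|v|²/2} -/
def maxw (v : E3) : ℝ := (2 * π) ^ (-(3 : ℝ) / 2) * Real.exp (-‖v‖ ^ 2 / 2)

/-- Grad's angular cutoff assumption (A2): `bf` is measurable, nonnegative,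
`K ≤ bf ≤ K⁻¹` on `[0,1]` for some `K > 0`, and `bf` vanishes on negatives. -/
def gradCutoff (bf : ℝ → ℝ) : Prop :=
  Measurable bf ∧ (∀ t, 0 ≤ bf t) ∧
    (∃ K : ℝ, 0 < K ∧ ∀ t ∈ Set.Icc (0 : ℝ) 1, K ≤ bf t ∧ bf t ≤ K⁻¹) ∧
    ∀ t : ℝ, t < 0 → bf t = 0

/-- gain operator Q⁺ -/
def Qgain (γ : ℝ) (bf : ℝ → ℝ) (f g : E3 → ℝ) (v : E3) : ℝ :=
  ∫ w : E3, ∫ σ : S2, ‖v - w‖ ^ γ * bf (cosTheta v w σ) * (f (vsP v w σ) * g (vP v w σ))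

/-- loss operator Q⁻ -/
def Qloss (γ : ℝ) (bf : ℝ → ℝ) (f g : E3 → ℝ) (v : E3) : ℝ :=
  ∫ w : E3, ∫ σ : S2, ‖v - w‖ ^ γ * bf (cosTheta v w σ) * (f w * g v)

/-- the Boltzmann collision operator Q = Q⁺ - Q⁻ -/
def Qcol (γ : ℝ) (bf : ℝ → ℝ) (f g : E3 → ℝ) (v : E3) : ℝ :=
  ∫ w : E3, ∫ σ : S2, ‖v - w‖ ^ γ * bf (cosTheta v w σ) *
    (f (vsP v w σ) * g (vP v w σ) - f w * g v)

/-- collision frequency ν(v) -/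
def nuF (γ : ℝ) (bf : ℝ → ℝ) (v : E3) : ℝ :=
  ∫ w : E3, ∫ σ : S2, ‖v - w‖ ^ γ * bf (cosTheta v w σ) * maxw w

/-- squared weighted norm ‖f‖²_{L²_q} -/
def wSqR (q : ℝ) (f : E3 → ℝ) : ℝ := ∫ v : E3, f v ^ 2 * jap v ^ (2 * q)

/-- weighted norm ‖f‖_{L²_q} -/
def wNorm (q : ℝ) (f : E3 → ℝ) : ℝ := Real.sqrt (wSqR q f)

/-- squared star norm ‖f‖²_{L²_{k+γ/2,*}} = ∫∫ μ(v*)|v-v*|^γ f(v)² ⟨v⟩^{2k} -/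
def starSq (γ k : ℝ) (f : E3 → ℝ) : ℝ :=
  ∫ v : E3, ∫ w : E3, maxw w * ‖v - w‖ ^ γ * f v ^ 2 * jap v ^ (2 * k)

/-- star norm ‖f‖_{L²_{k+γ/2,*}} -/
def starNorm (γ k : ℝ) (f : E3 → ℝ) : ℝ := Real.sqrt (starSq γ k f)

/-- squared exponentially weighted norm ‖f‖²_{L²_{q,a,b}} -/
def expSq (q a b : ℝ) (f : E3 → ℝ) : ℝ :=
  ∫ v : E3, f v ^ 2 * jap v ^ (2 * q) * Real.exp (2 * a * jap v ^ b)

/-- exponentially weighted norm ‖f‖_{L²_{q,a,b}} -/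
def expNorm (q a b : ℝ) (f : E3 → ℝ) : ℝ := Real.sqrt (expSq q a b f)

/-! ### Polar coordinates and the pre-post-collisional change of variables -/

instance finS2 : IsFiniteMeasure (volume : Measure S2) :=
  inferInstanceAs (IsFiniteMeasure (volume : Measure E3).toSphere)

lemma finrank_E3 : Module.finrank ℝ E3 = 3 := by simp

/-- The radial measure `r² dr` on `(0, ∞)`. -/
abbrev radM : Measure (Set.Ioi (0 : ℝ)) := Measure.volumeIoiPow 2

lemma lintegral_polar (g : E3 → ℝ≥0∞) (hg : Measurable g) :
    ∫⁻ x, g x = ∫⁻ ω : S2, ∫⁻ r, g ((r : ℝ) • (ω : E3)) ∂radM := by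
  have hmp := (volume : Measure E3).measurePreserving_homeomorphUnitSphereProd
  rw [finrank_E3] at hmp
  have h1 : ∫⁻ x, g x = ∫⁻ x : ({0}ᶜ : Set E3), g x
      ∂(volume.comap (Subtype.val : ({0}ᶜ : Set E3) → E3)) := by
    rw [lintegral_subtype_comap (MeasurableSet.singleton _).compl, restrict_compl_singleton]
  have h2 := hmp.symm (homeomorphUnitSphereProd E3).toMeasurableEquiv
  have h3 := h2.lintegral_comp (f := fun x : ({0}ᶜ : Set E3) => g x) (by fun_prop)
  rw [h1, ← h3, lintegral_prod _ (by fun_prop)]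
  rfl

lemma measurable_vP : Measurable fun p : E3 × E3 × S2 => vP p.1 p.2.1 p.2.2 := by
  unfold vP; fun_prop
lemma measurable_vsP : Measurable fun p : E3 × E3 × S2 => vsP p.1 p.2.1 p.2.2 := by
  unfold vsP; fun_prop

/-- Centre-of-mass coordinates: with `c = (v + v*)/2` and `v - v* = rω`, the incoming direction `ω`
and the outgoing direction `σ` play symmetric roles. -/
lemma collision_coords (Φ : E3 × E3 × E3 × E3 → ℝ≥0∞) (hΦ : Measurable Φ) :
    ∫⁻ v, ∫⁻ w, ∫⁻ σ : S2, Φ (v, w, vP v w σ, vsP v w σ) =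
      ∫⁻ ω : S2, ∫⁻ σ : S2, ∫⁻ r, (∫⁻ c : E3,
        Φ (c + ((r : ℝ) / 2) • (ω : E3), c - ((r : ℝ) / 2) • (ω : E3),
          c + ((r : ℝ) / 2) • (σ : E3), c - ((r : ℝ) / 2) • (σ : E3))) ∂radM := by
  have e1 : ∀ v : E3, ∫⁻ w, ∫⁻ σ : S2, Φ (v, w, vP v w σ, vsP v w σ) =
      ∫⁻ u : E3, ∫⁻ σ : S2, Φ (v, v - u, v - (2⁻¹ : ℝ) • u + (‖u‖ / 2) • (σ : E3),
        v - (2⁻¹ : ℝ) • u - (‖u‖ / 2) • (σ : E3)) := by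
    intro v
    rw [← lintegral_sub_left_eq_self _ v]
    refine lintegral_congr fun u => lintegral_congr fun σ => ?_
    have h : (2⁻¹ : ℝ) • (v + (v - u)) = v - (2⁻¹ : ℝ) • u := by module
    simp only [vP, vsP, sub_sub_cancel, h]
  simp_rw [e1]
  rw [lintegral_lintegral_swap (by fun_prop)]
  have e2 : ∀ u : E3, ∫⁻ v : E3, ∫⁻ σ : S2,
      Φ (v, v - u, v - (2⁻¹ : ℝ) • u + (‖u‖ / 2) • (σ : E3),
        v - (2⁻¹ : ℝ) • u - (‖u‖ / 2) • (σ : E3)) =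
      ∫⁻ c : E3, ∫⁻ σ : S2,
      Φ (c + (2⁻¹ : ℝ) • u, c - (2⁻¹ : ℝ) • u, c + (‖u‖ / 2) • (σ : E3),
        c - (‖u‖ / 2) • (σ : E3)) := by
    intro u
    rw [← lintegral_add_right_eq_self _ ((2⁻¹ : ℝ) • u)]
    refine lintegral_congr fun c => lintegral_congr fun σ => ?_
    have h : c + (2⁻¹ : ℝ) • u - u = c - (2⁻¹ : ℝ) • u := by module
    simp only [h, add_sub_cancel_right]
  simp_rw [e2]
  rw [lintegral_polar _ (by fun_prop)]
  refine lintegral_congr fun ω => ?_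
  have e3 : ∀ r : Set.Ioi (0 : ℝ), ∫⁻ c : E3, ∫⁻ σ : S2,
      Φ (c + (2⁻¹ : ℝ) • ((r : ℝ) • (ω : E3)), c - (2⁻¹ : ℝ) • ((r : ℝ) • (ω : E3)),
        c + (‖(r : ℝ) • (ω : E3)‖ / 2) • (σ : E3), c - (‖(r : ℝ) • (ω : E3)‖ / 2) • (σ : E3)) =
      ∫⁻ σ : S2, ∫⁻ c : E3, Φ (c + ((r : ℝ) / 2) • (ω : E3), c - ((r : ℝ) / 2) • (ω : E3),
          c + ((r : ℝ) / 2) • (σ : E3), c - ((r : ℝ) / 2) • (σ : E3)) := by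
    intro r
    rw [lintegral_lintegral_swap (by fun_prop)]
    have h1 : ‖(r : ℝ) • (ω : E3)‖ = r := by
      rw [norm_smul, norm_eq_of_mem_sphere, mul_one, Real.norm_of_nonneg (le_of_lt r.2)]
    have h2 : (2⁻¹ : ℝ) • ((r : ℝ) • (ω : E3)) = ((r : ℝ) / 2) • (ω : E3) := by
      rw [smul_smul]; congr 1; ring
    simp only [h1, h2]
  simp_rw [e3]
  rw [lintegral_lintegral_swap (by fun_prop)]

/-- The collision map `(v, v*, σ) ↦ (v', v*', (v - v*)/|v - v*|)` preserves measure: in centre-of-mass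
coordinates it exchanges `ω` and `σ`. -/
lemma prepost (Φ : E3 × E3 × E3 × E3 → ℝ≥0∞) (hΦ : Measurable Φ) :
    ∫⁻ v, ∫⁻ w, ∫⁻ σ : S2, Φ (v, w, vP v w σ, vsP v w σ) =
      ∫⁻ v, ∫⁻ w, ∫⁻ σ : S2, Φ (vP v w σ, vsP v w σ, v, w) := by
  rw [collision_coords Φ hΦ,
    collision_coords (fun p => Φ (p.2.2.1, p.2.2.2, p.1, p.2.1)) (by fun_prop)]
  rw [lintegral_lintegral_swap (by fun_prop)]

/-! ### Exponential integrals over the sphere -/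

/-- The Gaussian majorant, of variance `O(1)` along the first axis and `O(1/κ)` across it, used for
`sphere_exp_bound`. -/
lemma lintegral_aniso_gaussian {κ : ℝ} (hκ : 0 < κ) :
    ∫⁻ x : E3, ENNReal.ofReal (exp (1 - x 0 ^ 2 - κ / 2 * (‖x‖ ^ 2 - x 0 ^ 2))) =
      ENNReal.ofReal (exp 1 * √π * (2 * π) / κ) := by
  let b : Fin 3 → ℝ := ![1, κ / 2, κ / 2]
  have hb : ∀ i, 0 < b i := by intro i; fin_cases i <;> simp [b, hκ]
  have h1 : ∀ x : E3, exp (1 - x 0 ^ 2 - κ / 2 * (‖x‖ ^ 2 - x 0 ^ 2)) =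
      exp 1 * ∏ i, exp (-b i * (WithLp.ofLp x) i ^ 2) := by
    intro x
    rw [← Real.exp_sum, ← Real.exp_add, EuclideanSpace.real_norm_sq_eq]
    congr 1
    simp [Fin.sum_univ_three, b]
    ring
  have hint : Integrable fun y : Fin 3 → ℝ => ∏ i, exp (-b i * y i ^ 2) :=
    Integrable.fintype_prod (f := fun i (t : ℝ) => exp (-b i * t ^ 2))
      fun i => integrable_exp_neg_mul_sq (hb i)
  simp_rw [h1]
  rw [(PiLp.volume_preserving_ofLp (Fin 3)).lintegral_comp
    (f := fun y : Fin 3 → ℝ => ENNReal.ofReal (exp 1 * ∏ i, exp (-b i * y i ^ 2)))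
    (by fun_prop)]
  rw [← ofReal_integral_eq_lintegral_ofReal (hint.const_mul _)
    (Filter.Eventually.of_forall fun y => by positivity), integral_const_mul,
    integral_fintype_prod_volume_eq_prod (f := fun i (t : ℝ) => exp (-b i * t ^ 2))]
  congr 1
  simp_rw [integral_gaussian]
  have : √(π / (κ / 2)) * √(π / (κ / 2)) = π / (κ / 2) := Real.mul_self_sqrt (by positivity)
  have b0 : b 0 = 1 := rfl
  have b1 : b 1 = κ / 2 := rfl
  have b2 : b 2 = κ / 2 := rfl
  rw [Fin.prod_univ_three, b0, b1, b2, mul_assoc √(π / 1), this, div_one]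
  field_simp

lemma exists_isometry (ω : E3) (hω : ‖ω‖ = 1) :
    ∃ A : E3 ≃ₗᵢ[ℝ] E3, A (EuclideanSpace.single 0 1) = ω := by
  exact ⟨_, Submodule.reflection_sub (v := (EuclideanSpace.single 0 1 : E3)) (w := ω)
    (by simp [hω])⟩

/-- The function `e^{-κ(1 - ω·σ)}` lives on a cap of area `O(1/κ)`. Extending it to the unit ball by
homogeneity of degree zero and rotating `ω` to the first axis, it is dominated by an anisotropic
Gaussian. -/
lemma sphere_exp_bound {κ : ℝ} (hκ : 0 < κ) (ω : E3) (hω : ‖ω‖ = 1) :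
    ∫⁻ σ : S2, ENNReal.ofReal (exp (-κ * (1 - ⟪ω, (σ : E3)⟫))) ≤
      ENNReal.ofReal (6 * exp 1 * √π * π / κ) := by
  set J := ∫⁻ σ : S2, ENNReal.ofReal (exp (-κ * (1 - ⟪ω, (σ : E3)⟫))) with hJ
  let g : E3 → ℝ≥0∞ := fun x => (Set.Iio (1 : ℝ)).indicator 1 ‖x‖ *
    ENNReal.ofReal (exp (-κ * (1 - ⟪ω, x⟫ / ‖x‖)))
  have hg : Measurable g := by
    have : Measurable ((Set.Iio (1 : ℝ)).indicator (1 : ℝ → ℝ≥0∞)) :=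
      measurable_one.indicator measurableSet_Iio
    fun_prop
  have h1 : ∫⁻ x, g x = J * ENNReal.ofReal (1 / 3) := by
    rw [lintegral_polar g hg, hJ, ← lintegral_mul_const _ (by fun_prop)]
    refine lintegral_congr fun σ => ?_
    have e : ∀ r : Set.Ioi (0 : ℝ), g ((r : ℝ) • (σ : E3)) =
        (Set.Iio (⟨1, Set.mem_Ioi.2 one_pos⟩ : Set.Ioi (0 : ℝ))).indicator
          (fun _ => ENNReal.ofReal (exp (-κ * (1 - ⟪ω, (σ : E3)⟫)))) r := by
      intro r
      have h0 : (0 : ℝ) < r := r.2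
      have hn : ‖(r : ℝ) • (σ : E3)‖ = r := by
        rw [norm_smul, norm_eq_of_mem_sphere, mul_one, Real.norm_of_nonneg h0.le]
      simp only [g, hn, inner_smul_right, mul_div_cancel_left₀ _ h0.ne']
      by_cases hr : (r : ℝ) < 1
      · rw [Set.indicator_of_mem (by exact hr), Set.indicator_of_mem (by exact hr)]; simp
      · rw [Set.indicator_of_notMem (by exact hr), Set.indicator_of_notMem (by exact hr)]; simp
    simp_rw [e]
    rw [lintegral_indicator_const measurableSet_Iio, Measure.volumeIoiPow_apply_Iio]
    norm_num
  have h2 : ∫⁻ x, g x ≤ ENNReal.ofReal (exp 1 * √π * (2 * π) / κ) := by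
    obtain ⟨A, hA⟩ := exists_isometry ω hω
    rw [← lintegral_aniso_gaussian hκ, ← A.measurePreserving.lintegral_comp hg]
    refine lintegral_mono fun x => ?_
    have hin : ⟪ω, A x⟫ = x 0 := by
      rw [← hA, A.inner_map_map]
      simp [EuclideanSpace.inner_single_left]
    simp only [g, A.norm_map, hin]
    by_cases hx : ‖x‖ < 1
    · rw [Set.indicator_of_mem (by exact hx), Pi.one_apply, one_mul]
      refine ENNReal.ofReal_le_ofReal (exp_le_exp.2 ?_)
      have hx0 : x 0 ^ 2 ≤ ‖x‖ ^ 2 := by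
        have := PiLp.norm_apply_le x 0
        rw [Real.norm_eq_abs] at this
        exact sq_le_sq.2 (by rwa [abs_norm])
      have hn : ‖x‖ ^ 2 ≤ 1 := by nlinarith [norm_nonneg x]
      rcases eq_or_ne x 0 with rfl | hne
      · simp; linarith
      · have hp : 0 < ‖x‖ := norm_pos_iff.2 hne
        set t := x 0 / ‖x‖ with ht
        have hxt : x 0 = t * ‖x‖ := by rw [ht]; field_simp
        have : ‖x‖ ^ 2 - x 0 ^ 2 ≤ 2 * (1 - t) := by
          rw [hxt] at hx0 ⊢
          have ht2 : t ^ 2 ≤ 1 := by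
            by_contra! h
            nlinarith [pow_pos hp 2]
          nlinarith [sq_nonneg (1 - t)]
        nlinarith
    · rw [Set.indicator_of_notMem (by exact hx)]; simp
  rw [h1] at h2
  have h3 : J = J * ENNReal.ofReal (1 / 3) * ENNReal.ofReal 3 := by
    rw [mul_assoc, ← ENNReal.ofReal_mul (by norm_num)]; norm_num
  calc J = J * ENNReal.ofReal (1 / 3) * ENNReal.ofReal 3 := h3
    _ ≤ ENNReal.ofReal (exp 1 * √π * (2 * π) / κ) * ENNReal.ofReal 3 := by gcongr
    _ = _ := by
      rw [← ENNReal.ofReal_mul (by positivity)]; congr 1; ring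

/-! ### The substitution `u ↦ (u + |u|σ)/2` at fixed `σ` -/

/-- Version of `sphere_exp_bound` for `u` of any length. At `u = 0` the quotient is `0` by convention,
which the second summand of the constant covers. -/
lemma sphere_exp_bound' {κ : ℝ} (hκ : 0 < κ) (u : E3) :
    ∫⁻ σ : S2, ENNReal.ofReal (exp (-κ * (1 - ⟪u, (σ : E3)⟫ / ‖u‖))) ≤
      ENNReal.ofReal ((6 * exp 1 * √π * π + (volume : Measure S2).real Set.univ) / κ) := by
  rcases eq_or_ne u 0 with rfl | hu
  · simp only [inner_zero_left, norm_zero, div_zero, sub_zero, mul_one, lintegral_const]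
    rw [← ENNReal.ofReal_toReal (measure_ne_top (volume : Measure S2) Set.univ),
      ← ENNReal.ofReal_mul (by positivity)]
    refine ENNReal.ofReal_le_ofReal ?_
    rw [add_div]
    have h1 : exp (-κ) ≤ 1 / κ := by
      rw [exp_neg, ← one_div]
      exact one_div_le_one_div_of_le hκ (by linarith [add_one_le_exp κ])
    have h2 : 0 ≤ (volume : Measure S2).real Set.univ := measureReal_nonneg
    have h3 : 0 ≤ 6 * exp 1 * √π * π / κ := by positivity
    calc exp (-κ) * (volume : Measure S2).real Set.univ
        ≤ 1 / κ * (volume : Measure S2).real Set.univ := by gcongr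
      _ ≤ _ := by rw [div_mul_eq_mul_div, one_mul]; linarith
  · have h := sphere_exp_bound hκ (‖u‖⁻¹ • u) (by
      rw [norm_smul, norm_inv, norm_norm, inv_mul_cancel₀ (norm_ne_zero_iff.2 hu)])
    simp_rw [real_inner_smul_left, inv_mul_eq_div] at h
    refine h.trans (ENNReal.ofReal_le_ofReal ?_)
    gcongr
    exact le_add_of_nonneg_right measureReal_nonneg

/-- The map `v - v* ↦ v - v*'` for fixed `σ`. -/
def halfMap (σ : S2) (u : E3) : E3 := (2⁻¹ : ℝ) • u + (‖u‖ / 2) • (σ : E3)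

lemma hasFDerivAt_norm' (u : E3) (hu : u ≠ 0) :
    HasFDerivAt (fun x : E3 => ‖x‖) (‖u‖⁻¹ • innerSL ℝ u) u := by
  have h := (hasStrictFDerivAt_norm_sq u).hasFDerivAt.sqrt
    (by simpa using hu)
  simp only [Real.sqrt_sq (norm_nonneg _)] at h
  refine h.congr_fderiv ?_
  rw [← Nat.cast_smul_eq_nsmul ℝ, smul_smul]
  congr 1
  have := norm_pos_iff.2 hu
  push_cast
  field_simp

/-- The derivative `x ↦ (x + |u|⁻¹⟨u, x⟩ σ)/2` of `halfMap σ` at `u ≠ 0`. -/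
def halfMapDeriv (σ : S2) (u : E3) : E3 →L[ℝ] E3 :=
  (2⁻¹ : ℝ) • (ContinuousLinearMap.id ℝ E3 + (‖u‖⁻¹ • innerSL ℝ u).smulRight (σ : E3))

lemma hasFDerivAt_halfMap (σ : S2) (u : E3) (hu : u ≠ 0) :
    HasFDerivAt (halfMap σ) (halfMapDeriv σ u) u := by
  have h1 := (hasFDerivAt_norm' u hu).smul_const (σ : E3)
  have h2 := ((hasFDerivAt_id u).add h1).const_smul (2⁻¹ : ℝ)
  refine h2.congr_of_eventuallyEq (Filter.Eventually.of_forall fun x => ?_)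
  simp only [halfMap, id, Pi.add_apply, Pi.smul_apply, smul_add, smul_smul]
  congr 2
  ring

lemma det_halfMapDeriv (σ : S2) (u : E3) :
    (halfMapDeriv σ u).det = 8⁻¹ * (1 + ⟪u, (σ : E3)⟫ / ‖u‖) := by
  have h : ((halfMapDeriv σ u : E3 →L[ℝ] E3) : E3 →ₗ[ℝ] E3) =
      (2⁻¹ : ℝ) • LinearMap.transvection
        ((‖u‖⁻¹ • innerSL ℝ u : E3 →L[ℝ] ℝ) : E3 →ₗ[ℝ] ℝ) (σ : E3) := by
    ext x
    simp [halfMapDeriv, LinearMap.transvection]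
  rw [ContinuousLinearMap.det, h, LinearMap.det_smul, LinearMap.transvection.det, finrank_E3]
  simp [div_eq_inv_mul]
  norm_num

lemma inner_halfMap (σ : S2) (u : E3) : ⟪halfMap σ u, (σ : E3)⟫ = (⟪u, (σ : E3)⟫ + ‖u‖) / 2 := by
  have : ⟪(σ : E3), (σ : E3)⟫ = 1 := by
    rw [real_inner_self_eq_norm_sq, norm_eq_of_mem_sphere]; norm_num
  simp only [halfMap, inner_add_left, real_inner_smul_left, this]
  ring

lemma norm_halfMap_sq (σ : S2) (u : E3) :
    ‖halfMap σ u‖ ^ 2 = ‖u‖ * ((⟪u, (σ : E3)⟫ + ‖u‖) / 2) := by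
  rw [halfMap, norm_add_sq_real, norm_smul, norm_smul, norm_eq_of_mem_sphere,
    real_inner_smul_left, real_inner_smul_right]
  simp only [norm_inv, Real.norm_ofNat, norm_div, norm_norm]
  ring

lemma halfMap_injOn (σ : S2) : Set.InjOn (halfMap σ) {u | u ≠ 0 ∧ 0 ≤ ⟪u, (σ : E3)⟫} := by
  rintro u ⟨hu, hu'⟩ u₂ ⟨hu₂, hu₂'⟩ h
  have hp : 0 < ‖u‖ := norm_pos_iff.2 hu
  have h1 := inner_halfMap σ u
  have h2 := norm_halfMap_sq σ u
  rw [← h1] at h2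
  have h3 := norm_halfMap_sq σ u₂
  rw [← inner_halfMap σ u₂, ← h, h2] at h3
  have h4 : ‖u‖ = ‖u₂‖ := mul_right_cancel₀ (by rw [h1]; positivity) h3
  rw [halfMap, halfMap, h4] at h
  exact smul_right_injective E3 (by norm_num : (2⁻¹ : ℝ) ≠ 0) (add_right_cancel h)

/-- The Jacobian of `halfMap σ` is `(1 + u·σ/|u|)/8 ≥ 1/8` on the half space `u·σ ≥ 0`. -/
lemma lintegral_halfMap_le (σ : S2) (H : E3 → ℝ≥0∞) :
    ∫⁻ u in {u : E3 | 0 ≤ ⟪u, (σ : E3)⟫}, H (halfMap σ u) ≤ 8 * ∫⁻ y, H y := by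
  set s : Set E3 := {u | u ≠ 0 ∧ 0 ≤ ⟪u, (σ : E3)⟫} with hs
  have hms : MeasurableSet s := by
    apply MeasurableSet.inter
    · exact (MeasurableSet.singleton (0 : E3)).compl
    · exact measurableSet_le measurable_const
        (by fun_prop : Measurable fun u : E3 => ⟪u, (σ : E3)⟫)
  have hae : ({u : E3 | 0 ≤ ⟪u, (σ : E3)⟫} : Set E3) =ᵐ[volume] s := by
    have : ∀ᵐ u : E3, u ≠ 0 := Measure.ae_ne volume 0
    filter_upwards [this] with u hu
    apply propext
    exact ⟨fun h => ⟨hu, h⟩, fun h => h.2⟩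
  have key := lintegral_image_eq_lintegral_abs_det_fderiv_mul volume hms
    (fun u hu => (hasFDerivAt_halfMap σ u hu.1).hasFDerivWithinAt) (halfMap_injOn σ) H
  calc ∫⁻ u in {u : E3 | 0 ≤ ⟪u, (σ : E3)⟫}, H (halfMap σ u)
      = ∫⁻ u in s, H (halfMap σ u) := setLIntegral_congr hae
    _ ≤ ∫⁻ u in s, 8 * (ENNReal.ofReal |(halfMapDeriv σ u).det| * H (halfMap σ u)) := by
        refine setLIntegral_mono' hms fun u hu => ?_
        rw [← mul_assoc]
        refine le_mul_of_one_le_left (zero_le) ?_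
        have h8 : (8 : ℝ≥0∞) = ENNReal.ofReal 8 := by simp
        rw [h8, ← ENNReal.ofReal_mul (by norm_num), ENNReal.one_le_ofReal, det_halfMapDeriv]
        have : 0 ≤ ⟪u, (σ : E3)⟫ / ‖u‖ := div_nonneg hu.2 (norm_nonneg _)
        rw [abs_of_nonneg (by positivity)]
        linarith
    _ = 8 * ∫⁻ u in s, (ENNReal.ofReal |(halfMapDeriv σ u).det| * H (halfMap σ u)) :=
        lintegral_const_mul' _ _ (by simp)
    _ = 8 * ∫⁻ y in halfMap σ '' s, H y := by rw [key]
    _ ≤ 8 * ∫⁻ y, H y := by gcongr; exact Measure.restrict_le_self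

/-! ### The Japanese bracket and the convolution estimate -/

lemma jap_sq (v : E3) : jap v ^ 2 = 1 + ‖v‖ ^ 2 := Real.sq_sqrt (by positivity)
lemma one_le_jap (v : E3) : 1 ≤ jap v := by
  rw [jap, Real.one_le_sqrt]; nlinarith [sq_nonneg ‖v‖]
lemma jap_pos (v : E3) : 0 < jap v := one_pos.trans_le (one_le_jap v)
@[fun_prop] lemma measurable_jap : Measurable jap := by unfold jap; fun_prop

lemma jap_add_le (x y : E3) : jap (x + y) ≤ 2 * (jap x * jap y) := by
  have hx := jap_pos x
  have hy := jap_pos y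
  refine le_of_sq_le_sq ?_ (by positivity)
  rw [mul_pow, mul_pow, jap_sq, jap_sq, jap_sq]
  have h := norm_add_le x y
  have h2 : ‖x + y‖ ^ 2 ≤ (‖x‖ + ‖y‖) ^ 2 := by gcongr
  nlinarith [sq_nonneg (‖x‖ - ‖y‖), sq_nonneg (‖x‖ * ‖y‖), sq_nonneg ‖x‖, sq_nonneg ‖y‖]

lemma jap_sub_le (x y : E3) : jap (x - y) ≤ 2 * (jap x * jap y) := by
  have h := jap_add_le x (-y)
  have : jap (-y) = jap y := by simp [jap]
  rwa [this, ← sub_eq_add_neg] at h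

/-- Powers of comparable positive numbers are comparable, whatever the sign of the exponent. -/
lemma rpow_le_of_comparable {x y m : ℝ} (k : ℝ) (hx : 0 < x) (hy : 0 < y) (hm : 0 < m)
    (h1 : x ≤ m * y) (h2 : y ≤ m * x) : x ^ k ≤ m ^ |k| * y ^ k := by
  rcases le_total 0 k with hk | hk
  · rw [abs_of_nonneg hk, ← mul_rpow hm.le hy.le]
    exact rpow_le_rpow hx.le h1 hk
  · rw [abs_of_nonpos hk, rpow_neg hm.le, ← inv_rpow hm.le, ← mul_rpow (by positivity) hy.le]
    refine rpow_le_rpow_of_nonpos (by positivity) ?_ hk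
    rw [inv_mul_le_iff₀ hm]; exact h2

lemma integrable_jap_rpow : Integrable fun w : E3 => jap w ^ (-5 : ℝ) := by
  have h := integrable_rpow_neg_one_add_norm_sq (E := E3) (μ := volume) (r := 5)
    (by rw [finrank_E3]; norm_num)
  refine h.congr (Filter.Eventually.of_forall fun w => ?_)
  simp only [jap, Real.sqrt_eq_rpow]
  rw [← rpow_mul (by positivity)]
  norm_num

lemma integrableOn_norm_rpow {γ : ℝ} (hγ : -3 < γ) :
    IntegrableOn (fun u : E3 => ‖u‖ ^ γ) (Metric.ball 0 1) := by
  rw [integrableOn_fun_norm_addHaar volume (f := fun t => t ^ γ), finrank_E3]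
  have h : IntegrableOn (fun t : ℝ => t ^ (γ + 2)) (Set.Ioo 0 1) := by
    rw [intervalIntegral.integrableOn_Ioo_rpow_iff one_pos]; linarith
  refine h.congr_fun (fun t ht => ?_) measurableSet_Ioo
  simp only [smul_eq_mul]
  rw [rpow_add ht.1, mul_comm]
  norm_num

/-- Peetre's inequality away from the singularity of `|·|^γ`; the singularity itself is kept as a
locally integrable function of `v - w`. -/
lemma norm_sub_rpow_le {γ : ℝ} (hγ1 : -3 < γ) (hγ2 : γ ≤ 1) (v w : E3) :
    ‖v - w‖ ^ γ * jap w ^ (-8 : ℝ) ≤ 64 * jap v ^ γ *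
      (jap w ^ (-5 : ℝ) + (Metric.ball (0 : E3) 1).indicator (fun u => ‖u‖ ^ γ) (v - w)) := by
  set u := v - w with hu
  have hγ : |γ| ≤ 3 := abs_le.2 ⟨by linarith, by linarith⟩
  have hju := jap_pos u
  have hjv := jap_pos v
  have hjw := jap_pos w
  have h28 : (2 : ℝ) ^ |γ| ≤ 8 := by
    calc (2 : ℝ) ^ |γ| ≤ 2 ^ (3 : ℝ) := rpow_le_rpow_of_exponent_le (by norm_num) hγ
      _ = 8 := by norm_num
  have hP : jap u ^ γ ≤ 8 * jap w ^ (3 : ℝ) * jap v ^ γ := by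
    have h := rpow_le_of_comparable γ hju hjv (m := 2 * jap w) (by positivity)
      (by have := jap_sub_le v w; rw [hu]; linarith)
      (by have := jap_add_le u w; rw [hu, sub_add_cancel] at this; linarith)
    refine h.trans ?_
    gcongr
    rw [mul_rpow (by norm_num) hjw.le]
    gcongr
    exact one_le_jap w
  set φ := (Metric.ball (0 : E3) 1).indicator (fun u => ‖u‖ ^ γ) u with hφ
  have hφ0 : 0 ≤ φ := Set.indicator_nonneg (fun x _ => by positivity) _
  have hQ : ‖u‖ ^ γ ≤ 8 * jap u ^ γ * (1 + φ) := by
    have hn := norm_nonneg u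
    have hsq := jap_sq u
    by_cases h1 : ‖u‖ < 1
    · have hφe : φ = ‖u‖ ^ γ := Set.indicator_of_mem (by simpa using h1) _
      have h := rpow_le_of_comparable γ one_pos hju (m := 2) (by norm_num)
        (by linarith [one_le_jap u])
        (le_of_sq_le_sq (by nlinarith) (by norm_num))
      rw [one_rpow] at h
      have h8 : 1 ≤ 8 * jap u ^ γ := h.trans (by gcongr)
      rw [← hφe]
      nlinarith
    · push Not at h1
      have h := rpow_le_of_comparable γ (by linarith) hju (m := 2) (by norm_num)
        (le_of_sq_le_sq (by nlinarith) (by positivity) : ‖u‖ ≤ 2 * jap u)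
        (le_of_sq_le_sq (by nlinarith) (by positivity))
      calc ‖u‖ ^ γ ≤ 2 ^ |γ| * jap u ^ γ := h
        _ ≤ 8 * jap u ^ γ := by gcongr
        _ ≤ _ := le_mul_of_one_le_right (by positivity) (by linarith)
  have hw5 : jap w ^ (3 : ℝ) * jap w ^ (-8 : ℝ) = jap w ^ (-5 : ℝ) := by
    rw [← rpow_add hjw]; norm_num
  have hw1 : jap w ^ (-5 : ℝ) ≤ 1 := rpow_le_one_of_one_le_of_nonpos (one_le_jap w) (by norm_num)
  calc ‖u‖ ^ γ * jap w ^ (-8 : ℝ)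
      ≤ 8 * (8 * jap w ^ (3 : ℝ) * jap v ^ γ) * (1 + φ) * jap w ^ (-8 : ℝ) := by
        gcongr; exact hQ.trans (by gcongr)
    _ = 64 * jap v ^ γ * (jap w ^ (-5 : ℝ) * (1 + φ)) := by rw [← hw5]; ring
    _ ≤ _ := by
        gcongr
        nlinarith

/-- Convolving the singular kernel `|·|^γ` with a rapidly decaying function behaves like `⟨·⟩^γ`. -/
lemma conv_bound {γ : ℝ} (hγ1 : -3 < γ) (hγ2 : γ ≤ 1) :
    ∃ C : ℝ, 0 ≤ C ∧ ∀ v : E3,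
      ∫⁻ w, ENNReal.ofReal (‖v - w‖ ^ γ * jap w ^ (-8 : ℝ)) ≤ ENNReal.ofReal (C * jap v ^ γ) := by
  set φ : E3 → ℝ := (Metric.ball (0 : E3) 1).indicator (fun u => ‖u‖ ^ γ) with hφ
  have hφ0 : ∀ x, 0 ≤ φ x := Set.indicator_nonneg (fun x _ => by positivity)
  have hφi : Integrable φ :=
    (integrable_indicator_iff measurableSet_ball).2 (integrableOn_norm_rpow hγ1)
  have hj0 : ∀ x : E3, 0 ≤ jap x ^ (-5 : ℝ) := fun x => by have := jap_pos x; positivity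
  refine ⟨64 * ((∫ w : E3, jap w ^ (-5 : ℝ)) + ∫ x, φ x), ?_, fun v => ?_⟩
  · have h1 : 0 ≤ ∫ w : E3, jap w ^ (-5 : ℝ) := integral_nonneg hj0
    have h2 : 0 ≤ ∫ x, φ x := integral_nonneg hφ0
    positivity
  · have hint : Integrable fun w => jap w ^ (-5 : ℝ) + φ (v - w) :=
      integrable_jap_rpow.add (hφi.comp_sub_left v)
    have hv := jap_pos v
    calc ∫⁻ w, ENNReal.ofReal (‖v - w‖ ^ γ * jap w ^ (-8 : ℝ))
        ≤ ∫⁻ w, ENNReal.ofReal (64 * jap v ^ γ * (jap w ^ (-5 : ℝ) + φ (v - w))) :=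
          lintegral_mono fun w => ENNReal.ofReal_le_ofReal (norm_sub_rpow_le hγ1 hγ2 v w)
      _ = ENNReal.ofReal (∫ w, 64 * jap v ^ γ * (jap w ^ (-5 : ℝ) + φ (v - w))) := by
          rw [ofReal_integral_eq_lintegral_ofReal (hint.const_mul _)]
          exact Filter.Eventually.of_forall fun w =>
            mul_nonneg (by positivity) (add_nonneg (hj0 w) (hφ0 _))
      _ = _ := by
          rw [integral_const_mul, integral_add integrable_jap_rpow (hφi.comp_sub_left v),
            integral_sub_left_eq_self φ volume v]
          congr 1; ring

/-! ### Transfer of the exponential weight through a collision -/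

lemma rpow_mul_exp_bdd (M : ℝ) {b c : ℝ} (hb : 0 < b) (hc : 0 < c) :
    ∃ C : ℝ, 0 < C ∧ ∀ x : ℝ, 1 ≤ x → x ^ M * exp (-c * x ^ b) ≤ C := by
  have ht := tendsto_rpow_mul_exp_neg_mul_atTop_nhds_zero (M / b) c hc
  obtain ⟨Y, hY⟩ := Filter.eventually_atTop.1 (ht.eventually (gt_mem_nhds one_pos))
  have hcont : ContinuousOn (fun y : ℝ => y ^ (M / b) * exp (-c * y)) (Set.Icc 1 Y) := by
    refine ContinuousOn.mul (continuousOn_id.rpow_const fun y hy => Or.inl ?_) (by fun_prop)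
    simp only [id]; linarith [hy.1]
  obtain ⟨C, hC⟩ := (isCompact_Icc.image_of_continuousOn hcont).bddAbove
  refine ⟨max C 1, by positivity, fun x hx => ?_⟩
  have hx0 : 0 < x := by linarith
  have hy1 : 1 ≤ x ^ b := one_le_rpow hx hb.le
  have he : x ^ M = (x ^ b) ^ (M / b) := by
    rw [← rpow_mul hx0.le]; congr 1; field_simp
  rw [he]
  rcases le_total (x ^ b) Y with h | h
  · exact (hC ⟨x ^ b, ⟨hy1, h⟩, rfl⟩).trans (le_max_left _ _)
  · exact (hY _ h).le.trans (le_max_right _ _)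

/-- A Gaussian beats `x^M e^{D x^b}` for `b < 2`. -/
lemma rpow_mul_exp_sq_bdd (M : ℝ) {b D : ℝ} (hb2 : b < 2) (hb : 0 < b) (hD : 0 < D) :
    ∃ C : ℝ, 0 < C ∧ ∀ x : ℝ, 1 ≤ x → x ^ M * exp (D * x ^ b - x ^ 2 / 2) ≤ C := by
  obtain ⟨C, hC, h⟩ := rpow_mul_exp_bdd M (b := 2) (c := 1 / 4) (by norm_num) (by norm_num)
  set X := (4 * D) ^ (1 / (2 - b)) with hX
  refine ⟨C * exp (D * X ^ b), by positivity, fun x hx => ?_⟩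
  have hx0 : 0 < x := by linarith
  have hX0 : 0 < X := by positivity
  have h2 : x ^ (2 : ℝ) = x ^ 2 := by norm_num
  have key : D * x ^ b ≤ D * X ^ b + x ^ 2 / 4 := by
    rcases le_total x X with hxX | hxX
    · have : x ^ b ≤ X ^ b := rpow_le_rpow hx0.le hxX hb.le
      nlinarith [sq_nonneg x]
    · have h1 : 4 * D ≤ x ^ (2 - b) := by
        calc 4 * D = X ^ (2 - b) := by
              rw [hX, ← rpow_mul (by positivity), one_div, inv_mul_cancel₀ (by linarith), rpow_one]
          _ ≤ _ := rpow_le_rpow hX0.le hxX (by linarith)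
      have h3 : x ^ 2 = x ^ (2 - b) * x ^ b := by
        rw [← rpow_add hx0, ← h2]; congr 1; ring
      have h4 : 0 < x ^ b := by positivity
      have h5 : 0 < X ^ b := by positivity
      rw [h3]
      nlinarith
  calc x ^ M * exp (D * x ^ b - x ^ 2 / 2)
      ≤ x ^ M * exp (-(1 / 4) * x ^ (2 : ℝ) + D * X ^ b) := by
        gcongr; rw [h2]; linarith
    _ = x ^ M * exp (-(1 / 4) * x ^ (2 : ℝ)) * exp (D * X ^ b) := by rw [exp_add]; ring
    _ ≤ _ := by gcongr; exact h x hx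

/-- The weight `⟨v⟩^k e^{a⟨v⟩^b}`. -/
def wt (k a b : ℝ) (v : E3) : ℝ := jap v ^ k * exp (a * jap v ^ b)

lemma wt_pos (k a b : ℝ) (v : E3) : 0 < wt k a b v := by
  have := jap_pos v; unfold wt; positivity

lemma wt_sq (k a b : ℝ) (v : E3) :
    wt k a b v ^ 2 = jap v ^ (2 * k) * exp (2 * a * jap v ^ b) := by
  have := jap_pos v
  rw [wt, mul_pow, ← rpow_natCast, ← rpow_mul this.le, ← exp_nat_mul]
  push_cast
  congr 2 <;> ring

/-- Loss of weight in a collision with energy balance `|p|² + |n|² = |q|² + |m|²`: the energy carried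
away by `n`, at least a fraction of order `s` of that of `q` up to `m`, is missing from `p`. -/
lemma jap_rpow_drop {b s : ℝ} (hb : 0 < b) (hb2 : b < 2) (hs0 : 0 ≤ s) (hs1 : s ≤ 1)
    {p q m n : E3} (hE : ‖p‖ ^ 2 + ‖n‖ ^ 2 = ‖q‖ ^ 2 + ‖m‖ ^ 2)
    (hs : s * ‖q - m‖ ^ 2 ≤ ‖n - m‖ ^ 2) :
    jap p ^ b ≤ (1 - b / 8 * s) * jap q ^ b + 3 * jap m ^ b := by
  have hp := jap_pos p
  have hq := jap_pos q
  have hm := jap_pos m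
  have h1 : ‖n - m‖ ^ 2 ≤ 2 * ‖n‖ ^ 2 + 2 * ‖m‖ ^ 2 := by
    have h := norm_sub_le n m
    have h2 : ‖n - m‖ ^ 2 ≤ (‖n‖ + ‖m‖) ^ 2 := by gcongr
    nlinarith [sq_nonneg (‖n‖ - ‖m‖)]
  have h2 : ‖q‖ ^ 2 ≤ 2 * ‖q - m‖ ^ 2 + 2 * ‖m‖ ^ 2 := by
    have h := norm_add_le (q - m) m
    rw [sub_add_cancel] at h
    have h2 : ‖q‖ ^ 2 ≤ (‖q - m‖ + ‖m‖) ^ 2 := by gcongr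
    nlinarith [sq_nonneg (‖q - m‖ - ‖m‖)]
  have h3 : jap p ^ 2 ≤ (1 + -(s / 4)) * jap q ^ 2 + 3 * jap m ^ 2 := by
    rw [jap_sq, jap_sq, jap_sq]
    have := mul_le_mul_of_nonneg_left h2 hs0
    have h4 : s * ‖m‖ ^ 2 ≤ 1 * ‖m‖ ^ 2 := by gcongr
    nlinarith [sq_nonneg ‖m‖]
  have hsq : ∀ x : E3, (jap x ^ 2) ^ (b / 2) = jap x ^ b := by
    intro x
    rw [← rpow_natCast, ← rpow_mul (jap_pos x).le]; congr 1; push_cast; ring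
  have hs4 : 0 ≤ 1 + -(s / 4) := by linarith
  calc jap p ^ b = (jap p ^ 2) ^ (b / 2) := (hsq p).symm
    _ ≤ ((1 + -(s / 4)) * jap q ^ 2 + 3 * jap m ^ 2) ^ (b / 2) :=
        rpow_le_rpow (by positivity) h3 (by linarith)
    _ ≤ ((1 + -(s / 4)) * jap q ^ 2) ^ (b / 2) + (3 * jap m ^ 2) ^ (b / 2) :=
        rpow_add_le_add_rpow (by positivity) (by positivity) (by linarith) (by linarith)
    _ = (1 + -(s / 4)) ^ (b / 2) * jap q ^ b + 3 ^ (b / 2) * jap m ^ b := by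
        rw [mul_rpow hs4 (by positivity), mul_rpow (by norm_num) (by positivity), hsq, hsq]
    _ ≤ (1 - b / 8 * s) * jap q ^ b + 3 * jap m ^ b := by
        gcongr
        · have := rpow_one_add_le_one_add_mul_self (s := -(s / 4)) (p := b / 2)
            (by linarith) (by linarith) (by linarith)
          linarith
        · calc (3 : ℝ) ^ (b / 2) ≤ 3 ^ (1 : ℝ) :=
                rpow_le_rpow_of_exponent_le (by norm_num) (by linarith)
            _ = 3 := rpow_one 3

lemma jap_le_of_energy {p q m n : E3} (hE : ‖p‖ ^ 2 + ‖n‖ ^ 2 = ‖q‖ ^ 2 + ‖m‖ ^ 2) :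
    jap p ≤ jap q * jap m := by
  have hq := jap_pos q
  have hm := jap_pos m
  refine le_of_sq_le_sq ?_ (by positivity)
  rw [mul_pow, jap_sq, jap_sq, jap_sq]
  nlinarith [sq_nonneg ‖n‖, mul_nonneg (sq_nonneg ‖q‖) (sq_nonneg ‖m‖)]

lemma maxw_pos (v : E3) : 0 < maxw v := by unfold maxw; positivity

lemma maxw_le (v : E3) : maxw v ≤ exp (1 / 2) * exp (-jap v ^ 2 / 2) := by
  have h1 : (2 * π) ^ (-(3 : ℝ) / 2) ≤ 1 :=
    rpow_le_one_of_one_le_of_nonpos (by linarith [pi_gt_three]) (by norm_num)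
  rw [maxw, ← exp_add, jap_sq]
  calc _ ≤ 1 * exp (-‖v‖ ^ 2 / 2) := by gcongr
    _ = _ := by rw [one_mul]; congr 1; ring

/-- If the Maxwellian sits at `m`, the weight passes from `p` to `q` with exponential gain in the
fraction `s` of energy transferred. The gain may be measured at `p` or at `q`. -/
lemma weight_grazing (k : ℝ) {a b : ℝ} (ha : 0 < a) (hb : 0 < b) (hb2 : b < 2) :
    ∃ C : ℝ, 0 < C ∧ ∀ (p q m n : E3) (s : ℝ), 0 ≤ s → s ≤ 1 →
      ‖p‖ ^ 2 + ‖n‖ ^ 2 = ‖q‖ ^ 2 + ‖m‖ ^ 2 → s * ‖q - m‖ ^ 2 ≤ ‖n - m‖ ^ 2 →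
      ‖q - m‖ ^ 2 ≤ 2 * ‖p - m‖ ^ 2 → ∀ x ∈ ({p, q} : Set E3),
      maxw m * wt k a b p ≤
        C * jap m ^ (-8 : ℝ) * exp (-(a * b / 8) * (jap x ^ b * s)) * wt k a b q := by
  obtain ⟨C, hC, h⟩ := rpow_mul_exp_sq_bdd (|k| + 8) hb2 hb (D := 4 * a) (by positivity)
  refine ⟨exp (1 / 2) * 5 ^ |k| * C, by positivity, ?_⟩
  intro p q m n s hs0 hs1 hE hs hpm x hx
  have hp := jap_pos p
  have hq := jap_pos q
  have hm := jap_pos m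
  have hm1 := one_le_jap m
  have hd := jap_rpow_drop hb hb2 hs0 hs1 hE hs
  have hpb : 0 < jap p ^ b := by positivity
  have hqb : 0 < jap q ^ b := by positivity
  have hmb : 0 < jap m ^ b := by positivity
  have hexp : a * jap p ^ b ≤ -(a * b / 8) * (jap x ^ b * s) + 4 * a * jap m ^ b
      + a * jap q ^ b := by
    rcases hx with rfl | hx
    · have h1 : jap x ^ b - 3 * jap m ^ b ≤ jap q ^ b := by
        have : 0 ≤ b / 8 * s * jap q ^ b := by positivity
        linarith
      have h2 : b / 8 * s * (jap x ^ b - 3 * jap m ^ b) ≤ b / 8 * s * jap q ^ b := by gcongr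
      have h3 : b / 8 * s ≤ 1 / 4 := by nlinarith
      have h4 : b / 8 * s * jap m ^ b ≤ 1 / 4 * jap m ^ b := by gcongr
      have h5 : jap x ^ b ≤ -(b / 8) * (jap x ^ b * s) + 4 * jap m ^ b + jap q ^ b := by
        nlinarith
      nlinarith
    · rw [Set.mem_singleton_iff] at hx
      subst hx
      nlinarith
  have hpoly : jap p ^ k ≤ 5 ^ |k| * jap m ^ |k| * jap q ^ k := by
    rw [← mul_rpow (by norm_num) hm.le]
    refine rpow_le_of_comparable k hp hq (by positivity) ?_ ?_
    · have := jap_le_of_energy hE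
      nlinarith [mul_pos hq hm]
    · refine le_of_sq_le_sq ?_ (by positivity)
      rw [mul_pow, mul_pow, jap_sq, jap_sq, jap_sq]
      have h := norm_add_le (q - m) m
      rw [sub_add_cancel] at h
      have h2 : ‖q‖ ^ 2 ≤ (‖q - m‖ + ‖m‖) ^ 2 := by gcongr
      have h3 := norm_sub_le p m
      have h4 : ‖p - m‖ ^ 2 ≤ (‖p‖ + ‖m‖) ^ 2 := by gcongr
      nlinarith [sq_nonneg (‖q - m‖ - ‖m‖), sq_nonneg (‖p‖ - ‖m‖), sq_nonneg ‖p‖, sq_nonneg ‖m‖,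
        mul_nonneg (sq_nonneg ‖p‖) (sq_nonneg ‖m‖)]
  have hCm := h (jap m) hm1
  have hsplit : jap m ^ |k| * exp (4 * a * jap m ^ b - jap m ^ 2 / 2) ≤
      C * jap m ^ (-8 : ℝ) := by
    rw [rpow_add hm] at hCm
    have h8 : jap m ^ (8 : ℝ) * jap m ^ (-8 : ℝ) = 1 := by rw [← rpow_add hm]; norm_num
    calc _ = (jap m ^ |k| * jap m ^ (8 : ℝ) * exp (4 * a * jap m ^ b - jap m ^ 2 / 2)) *
          jap m ^ (-8 : ℝ) := by
            linear_combination (-(jap m ^ |k| * exp (4 * a * jap m ^ b - jap m ^ 2 / 2))) * h8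
      _ ≤ _ := by gcongr
  calc maxw m * wt k a b p
      ≤ (exp (1 / 2) * exp (-jap m ^ 2 / 2)) * ((5 ^ |k| * jap m ^ |k| * jap q ^ k) *
          exp (-(a * b / 8) * (jap x ^ b * s) + 4 * a * jap m ^ b + a * jap q ^ b)) := by
        unfold wt
        gcongr
        exact maxw_le m
    _ = exp (1 / 2) * 5 ^ |k| * (jap m ^ |k| * exp (4 * a * jap m ^ b - jap m ^ 2 / 2)) *
          exp (-(a * b / 8) * (jap x ^ b * s)) * wt k a b q := by
        have e1 : exp (4 * a * jap m ^ b - jap m ^ 2 / 2) =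
            exp (4 * a * jap m ^ b) * exp (-jap m ^ 2 / 2) := by
          rw [← exp_add]; congr 1; ring
        rw [exp_add, exp_add, e1, wt]; ring
    _ ≤ exp (1 / 2) * 5 ^ |k| * (C * jap m ^ (-8 : ℝ)) *
          exp (-(a * b / 8) * (jap x ^ b * s)) * wt k a b q := by
        have := wt_pos k a b q
        gcongr
    _ = _ := by ring

/-- When at least a fixed fraction of the energy is transferred, the gain in `weight_grazing`
beats all powers. -/
lemma weight_wide (k : ℝ) {a b : ℝ} (ha : 0 < a) (hb : 0 < b) (hb2 : b < 2) :
    ∃ C : ℝ, 0 < C ∧ ∀ (p q m n : E3),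
      ‖p‖ ^ 2 + ‖n‖ ^ 2 = ‖q‖ ^ 2 + ‖m‖ ^ 2 → 1 / 2 * ‖q - m‖ ^ 2 ≤ ‖n - m‖ ^ 2 →
      maxw m * wt k a b p ≤ C * (jap q * jap m) ^ (-16 : ℝ) * wt k a b q := by
  obtain ⟨C, hC, h⟩ := rpow_mul_exp_sq_bdd (|k| + 16) hb2 hb (D := 3 * a) (by positivity)
  obtain ⟨C', hC', h'⟩ := rpow_mul_exp_bdd (|k| + |k| + 16) hb (c := a * b / 16) (by positivity)
  refine ⟨exp (1 / 2) * C * C', by positivity, ?_⟩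
  intro p q m n hE hs
  have hp := jap_pos p
  have hq := jap_pos q
  have hm := jap_pos m
  have hd := jap_rpow_drop hb hb2 (by norm_num) (by norm_num) hE hs
  have hexp : a * jap p ^ b ≤ -(a * b / 16) * jap q ^ b + 3 * a * jap m ^ b
      + a * jap q ^ b := by
    nlinarith
  have hpoly : jap p ^ k ≤ jap q ^ (|k| + |k|) * jap m ^ |k| * jap q ^ k := by
    have h1 : jap p ^ k ≤ (jap q * jap m) ^ |k| :=
      (rpow_le_rpow_of_exponent_le (one_le_jap p) (le_abs_self k)).trans
        (rpow_le_rpow hp.le (jap_le_of_energy hE) (abs_nonneg k))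
    have h2 : 1 ≤ jap q ^ |k| * jap q ^ k := by
      rw [← rpow_add hq]
      exact one_le_rpow (one_le_jap q) (by linarith [neg_abs_le k])
    rw [mul_rpow hq.le hm.le] at h1
    rw [rpow_add hq]
    calc _ ≤ jap q ^ |k| * jap m ^ |k| * 1 := by rwa [mul_one]
      _ ≤ jap q ^ |k| * jap m ^ |k| * (jap q ^ |k| * jap q ^ k) := by gcongr
      _ = _ := by ring
  have hCm := h (jap m) (one_le_jap m)
  have hCq := h' (jap q) (one_le_jap q)
  have h16 : ∀ x : E3, jap x ^ (16 : ℝ) * jap x ^ (-16 : ℝ) = 1 := fun x => by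
    rw [← rpow_add (jap_pos x)]; norm_num
  have hsm : jap m ^ |k| * exp (3 * a * jap m ^ b - jap m ^ 2 / 2) ≤
      C * jap m ^ (-16 : ℝ) := by
    rw [rpow_add hm] at hCm
    calc _ = (jap m ^ |k| * jap m ^ (16 : ℝ) * exp (3 * a * jap m ^ b - jap m ^ 2 / 2)) *
          jap m ^ (-16 : ℝ) := by
            linear_combination (-(jap m ^ |k| * exp (3 * a * jap m ^ b - jap m ^ 2 / 2))) * h16 m
      _ ≤ _ := by gcongr
  have hsq : jap q ^ (|k| + |k|) * exp (-(a * b / 16) * jap q ^ b) ≤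
      C' * jap q ^ (-16 : ℝ) := by
    rw [rpow_add hq (|k| + |k|)] at hCq
    calc _ = (jap q ^ (|k| + |k|) * jap q ^ (16 : ℝ) * exp (-(a * b / 16) * jap q ^ b)) *
          jap q ^ (-16 : ℝ) := by
            linear_combination
              (-(jap q ^ (|k| + |k|) * exp (-(a * b / 16) * jap q ^ b))) * h16 q
      _ ≤ _ := by gcongr
  calc maxw m * wt k a b p
      ≤ (exp (1 / 2) * exp (-jap m ^ 2 / 2)) *
          ((jap q ^ (|k| + |k|) * jap m ^ |k| * jap q ^ k) *
          exp (-(a * b / 16) * jap q ^ b + 3 * a * jap m ^ b + a * jap q ^ b)) := by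
        unfold wt
        gcongr
        exact maxw_le m
    _ = exp (1 / 2) * (jap m ^ |k| * exp (3 * a * jap m ^ b - jap m ^ 2 / 2)) *
          (jap q ^ (|k| + |k|) * exp (-(a * b / 16) * jap q ^ b)) * wt k a b q := by
        have e1 : exp (3 * a * jap m ^ b - jap m ^ 2 / 2) =
            exp (3 * a * jap m ^ b) * exp (-jap m ^ 2 / 2) := by
          rw [← exp_add]; congr 1; ring
        rw [exp_add, exp_add, e1, wt]; ring
    _ ≤ exp (1 / 2) * (C * jap m ^ (-16 : ℝ)) * (C' * jap q ^ (-16 : ℝ)) * wt k a b q := by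
        have := wt_pos k a b q
        gcongr
    _ = _ := by rw [mul_rpow hq.le hm.le]; ring

/-! ### Geometry of a collision and pointwise bounds -/

lemma vP_sub_vsP (v w : E3) (σ : S2) : vP v w σ - vsP v w σ = ‖v - w‖ • (σ : E3) := by
  unfold vP vsP; module

lemma norm_vP_sub_vsP (v w : E3) (σ : S2) : ‖vP v w σ - vsP v w σ‖ = ‖v - w‖ := by
  rw [vP_sub_vsP, norm_smul, norm_norm, norm_eq_of_mem_sphere, mul_one]

lemma cosTheta_mul (v w : E3) (σ : S2) :
    cosTheta v w σ * ‖v - w‖ = ⟪v - w, (σ : E3)⟫ := by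
  unfold cosTheta
  rcases eq_or_ne (v - w) 0 with h | h
  · simp [h]
  · exact div_mul_cancel₀ _ (norm_ne_zero_iff.2 h)

lemma abs_cosTheta_le (v w : E3) (σ : S2) : |cosTheta v w σ| ≤ 1 := by
  have := abs_real_inner_div_norm_mul_norm_le_one (v - w) (σ : E3)
  rwa [norm_eq_of_mem_sphere, mul_one] at this

lemma cosTheta_eq (v w : E3) (σ : S2) :
    cosTheta v w σ = ⟪v - w, vP v w σ - vsP v w σ⟫ / ‖v - w‖ ^ 2 := by
  rw [vP_sub_vsP, real_inner_smul_right, cosTheta]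
  rcases eq_or_ne (v - w) 0 with h | h
  · simp [h]
  · have := norm_ne_zero_iff.2 h
    field_simp

lemma energy (v w : E3) (σ : S2) :
    ‖v‖ ^ 2 + ‖w‖ ^ 2 = ‖vP v w σ‖ ^ 2 + ‖vsP v w σ‖ ^ 2 := by
  have h1 := parallelogram_law_with_norm ℝ v w
  have h2 := parallelogram_law_with_norm ℝ (vP v w σ) (vsP v w σ)
  have h3 : vP v w σ + vsP v w σ = v + w := by unfold vP vsP; module
  rw [h3, norm_vP_sub_vsP] at h2
  linarith

lemma norm_w_sub_vsP (v w : E3) (σ : S2) :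
    ‖w - vsP v w σ‖ ^ 2 = (1 - cosTheta v w σ) / 2 * ‖v - w‖ ^ 2 := by
  have h : w - vsP v w σ = (‖v - w‖ / 2) • (σ : E3) - (2⁻¹ : ℝ) • (v - w) := by
    unfold vsP; module
  have h2 := cosTheta_mul v w σ
  rw [h, norm_sub_sq_real, norm_smul, norm_smul, norm_eq_of_mem_sphere, real_inner_smul_left,
    real_inner_smul_right, real_inner_comm, ← h2]
  simp only [norm_inv, Real.norm_ofNat, norm_div, norm_norm]
  ring

lemma norm_w_sub_vP (v w : E3) (σ : S2) :
    ‖w - vP v w σ‖ ^ 2 = (1 + cosTheta v w σ) / 2 * ‖v - w‖ ^ 2 := by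
  have h : w - vP v w σ = - ((‖v - w‖ / 2) • (σ : E3) + (2⁻¹ : ℝ) • (v - w)) := by
    unfold vP; module
  have h2 := cosTheta_mul v w σ
  rw [h, norm_neg, norm_add_sq_real, norm_smul, norm_smul, norm_eq_of_mem_sphere,
    real_inner_smul_left, real_inner_smul_right, real_inner_comm, ← h2]
  simp only [norm_inv, Real.norm_ofNat, norm_div, norm_norm]
  ring

lemma norm_v_sub_vsP (v w : E3) (σ : S2) :
    ‖v - vsP v w σ‖ ^ 2 = (1 + cosTheta v w σ) / 2 * ‖v - w‖ ^ 2 := by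
  have h : v - vsP v w σ = (‖v - w‖ / 2) • (σ : E3) + (2⁻¹ : ℝ) • (v - w) := by
    unfold vsP; module
  have h2 := cosTheta_mul v w σ
  rw [h, norm_add_sq_real, norm_smul, norm_smul, norm_eq_of_mem_sphere,
    real_inner_smul_left, real_inner_smul_right, real_inner_comm, ← h2]
  simp only [norm_inv, Real.norm_ofNat, norm_div, norm_norm]
  ring

/-- The weighted integrand of `Q⁺(μ, f) f`, dominated using `xy ≤ x² + y²` so that the two values
`f(v)`, `f(v')` decouple; the exponential factors retain the decay for non-grazing collisions. -/
lemma pointwise_mu_f (k : ℝ) {a b : ℝ} (ha : 0 < a) (hb : 0 < b) (hb2 : b < 2) :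
    ∃ C : ℝ, 0 < C ∧ ∀ (f : E3 → ℝ) (v w : E3) (σ : S2), 0 ≤ cosTheta v w σ →
      maxw (vsP v w σ) * |f (vP v w σ)| * |f v| * wt k a b v ^ 2 ≤
        C * jap (vsP v w σ) ^ (-8 : ℝ) *
          (exp (-(a * b / 8) * (jap v ^ b * ((1 - cosTheta v w σ) / 2))) *
              (|f v| * wt k a b v) ^ 2 +
            exp (-(a * b / 8) * (jap (vP v w σ) ^ b * ((1 - cosTheta v w σ) / 2))) *
              (|f (vP v w σ)| * wt k a b (vP v w σ)) ^ 2) := by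
  obtain ⟨C, hC, H⟩ := weight_grazing k ha hb hb2
  refine ⟨C, hC, fun f v w σ hc => ?_⟩
  have hc1 := (abs_le.1 (abs_cosTheta_le v w σ)).2
  have H' := H v (vP v w σ) (vsP v w σ) w ((1 - cosTheta v w σ) / 2) (by linarith) (by linarith)
    (energy v w σ) (by rw [norm_vP_sub_vsP, norm_w_sub_vsP])
    (by rw [norm_vP_sub_vsP, norm_v_sub_vsP]; nlinarith [sq_nonneg ‖v - w‖])
  have h1 := H' v (by simp)
  have h2 := H' (vP v w σ) (by simp)
  set q := vP v w σ
  set m := vsP v w σ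
  set J := jap m ^ (-8 : ℝ)
  have hJ : 0 < J := rpow_pos_of_pos (jap_pos _) _
  set e₁ := exp (-(a * b / 8) * (jap v ^ b * ((1 - cosTheta v w σ) / 2)))
  set e₂ := exp (-(a * b / 8) * (jap q ^ b * ((1 - cosTheta v w σ) / 2)))
  have he₁ : 0 < e₁ := exp_pos _
  have he₂ : 0 < e₂ := exp_pos _
  have hA := wt_pos k a b v
  have hB := wt_pos k a b q
  set x := |f v| * wt k a b v with hx
  set y := |f q| * wt k a b q with hy
  have hx0 : 0 ≤ x := by positivity
  have hy0 : 0 ≤ y := by positivity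
  have e : maxw m * |f q| * |f v| * wt k a b v ^ 2 = (maxw m * wt k a b v) * (|f q| * x) := by
    rw [hx]; ring
  have key : ∀ t : ℝ, maxw m * wt k a b v ≤ C * J * t * wt k a b q → 
      maxw m * |f q| * |f v| * wt k a b v ^ 2 ≤ C * J * t * (x * y) := by
    intro t ht
    rw [e]
    calc _ ≤ C * J * t * wt k a b q * (|f q| * x) := by gcongr
      _ = _ := by rw [hy]; ring
  rcases le_total x y with h | h
  · refine (key _ h2).trans ?_
    rw [mul_assoc (C * J)]
    gcongr
    nlinarith [mul_le_mul_of_nonneg_right h hy0, mul_nonneg he₁.le (sq_nonneg x)]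
  · refine (key _ h1).trans ?_
    rw [mul_assoc (C * J)]
    gcongr
    nlinarith [mul_le_mul_of_nonneg_left h hx0, mul_nonneg he₂.le (sq_nonneg y)]

/-- Counterpart of `pointwise_mu_f` for `Q⁺(f, μ) f`: at `cos θ ≥ 0` a fixed fraction of the energy is
transferred, so the bound decays in both velocities. -/
lemma pointwise_f_mu (k : ℝ) {a b : ℝ} (ha : 0 < a) (hb : 0 < b) (hb2 : b < 2) :
    ∃ C : ℝ, 0 < C ∧ ∀ (f : E3 → ℝ) (v w : E3) (σ : S2), 0 ≤ cosTheta v w σ →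
      |f (vsP v w σ)| * maxw (vP v w σ) * |f v| * wt k a b v ^ 2 ≤
        C * ((jap v * jap w) ^ (-8 : ℝ) * (|f v| * wt k a b v) ^ 2 +
          (jap (vP v w σ) * jap (vsP v w σ)) ^ (-8 : ℝ) *
            (|f (vsP v w σ)| * wt k a b (vsP v w σ)) ^ 2) := by
  obtain ⟨C, hC, H⟩ := weight_wide k ha hb hb2
  refine ⟨C, hC, fun f v w σ hc => ?_⟩
  have hE := energy v w σ
  have h1 := H v (vsP v w σ) (vP v w σ) w (by linarith)
    (by rw [norm_sub_rev, norm_vP_sub_vsP, norm_w_sub_vP]; nlinarith [sq_nonneg ‖v - w‖])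
  have j1 := jap_le_of_energy (p := v) (n := w) (q := vP v w σ) (m := vsP v w σ) hE
  have j2 := jap_le_of_energy (p := w) (n := v) (q := vP v w σ) (m := vsP v w σ) (by linarith)
  set m := vP v w σ
  set q := vsP v w σ
  have := one_le_jap m
  have := one_le_jap q
  have := one_le_jap v
  have := one_le_jap w
  have hP : 1 ≤ jap m * jap q := one_le_mul_of_one_le_of_one_le ‹_› ‹_›
  have hR : 1 ≤ jap v * jap w := one_le_mul_of_one_le_of_one_le ‹_› ‹_›
  have k1 : (jap q * jap m) ^ (-16 : ℝ) ≤ (jap m * jap q) ^ (-8 : ℝ) := by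
    rw [mul_comm]; exact rpow_le_rpow_of_exponent_le hP (by norm_num)
  have k2 : (jap q * jap m) ^ (-16 : ℝ) ≤ (jap v * jap w) ^ (-8 : ℝ) := by
    have : (jap q * jap m) ^ (-16 : ℝ) = ((jap m * jap q) ^ (2 : ℝ)) ^ (-8 : ℝ) := by
      rw [← rpow_mul (by positivity), mul_comm (jap q)]; norm_num
    rw [this]
    refine rpow_le_rpow_of_nonpos (by positivity) ?_ (by norm_num)
    rw [rpow_two, sq]
    exact mul_le_mul j1 j2 (by positivity) (by positivity)
  have hA := wt_pos k a b v
  have hB := wt_pos k a b q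
  set x := |f v| * wt k a b v with hx
  set y := |f q| * wt k a b q with hy
  set P := (jap m * jap q) ^ (-8 : ℝ)
  set R := (jap v * jap w) ^ (-8 : ℝ)
  set T := (jap q * jap m) ^ (-16 : ℝ)
  have hP0 : 0 < P := by positivity
  have hR0 : 0 < R := by positivity
  have hT0 : 0 < T := by positivity
  have hx0 : 0 ≤ x := by positivity
  have hy0 : 0 ≤ y := by positivity
  calc |f q| * maxw m * |f v| * wt k a b v ^ 2 = (maxw m * wt k a b v) * (|f q| * x) := by
        rw [hx]; ring
    _ ≤ C * T * wt k a b q * (|f q| * x) := by gcongr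
    _ = C * (T * (x * y)) := by rw [hy]; ring
    _ ≤ _ := by
      gcongr
      have : x * y ≤ x ^ 2 + y ^ 2 := by nlinarith [sq_nonneg (x - y), sq_nonneg x, sq_nonneg y]
      calc T * (x * y) ≤ T * (x ^ 2 + y ^ 2) := by gcongr
        _ = T * x ^ 2 + T * y ^ 2 := by ring
        _ ≤ _ := by gcongr

/-! ### Integral bounds for the grazing part -/

/-- The constant in `sphere_exp_bound'`. -/
def sphC : ℝ := 6 * exp 1 * √π * π + (volume : Measure S2).real Set.univ

lemma sphC_nonneg : 0 ≤ sphC := by unfold sphC; positivity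

@[fun_prop] lemma measurable_cosTheta (v : E3) :
    Measurable fun p : E3 × S2 => cosTheta v p.1 p.2 := by
  unfold cosTheta; fun_prop

lemma halfMap_compare (σ : S2) (u : E3) (h : 0 ≤ ⟪u, (σ : E3)⟫) (γ : ℝ) :
    ‖u‖ ^ γ ≤ 2 ^ |γ| * ‖halfMap σ u‖ ^ γ ∧
      ⟪u, (σ : E3)⟫ / ‖u‖ ≤ ⟪halfMap σ u, (σ : E3)⟫ / ‖halfMap σ u‖ := by
  rcases eq_or_ne u 0 with rfl | hu
  · have h0 : halfMap σ 0 = 0 := by simp [halfMap]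
    rw [h0]
    refine ⟨?_, le_rfl⟩
    have : (1 : ℝ) ≤ 2 ^ |γ| := one_le_rpow (by norm_num) (abs_nonneg _)
    exact le_mul_of_one_le_left (by positivity) this
  have hp : 0 < ‖u‖ := norm_pos_iff.2 hu
  have hsq := norm_halfMap_sq σ u
  have hin := inner_halfMap σ u
  have hle : ⟪u, (σ : E3)⟫ ≤ ‖u‖ := by
    have := real_inner_le_norm u (σ : E3)
    rwa [norm_eq_of_mem_sphere, mul_one] at this
  set y := halfMap σ u
  have hy : 0 < ‖y‖ := by
    have : 0 < ‖y‖ ^ 2 := by rw [hsq]; positivity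
    exact norm_pos_iff.2 fun h0 => by simp [h0] at this
  have h1 : ‖y‖ ≤ ‖u‖ := by
    refine (sq_le_sq₀ hy.le hp.le).1 ?_
    rw [hsq]; nlinarith
  have h2 : ‖u‖ ≤ 2 * ‖y‖ := by
    refine (sq_le_sq₀ hp.le (by positivity)).1 ?_
    rw [mul_pow, hsq]; nlinarith [mul_nonneg hp.le h]
  refine ⟨rpow_le_of_comparable γ hp hy two_pos h2 (h1.trans (by linarith)), ?_⟩
  rw [div_le_div_iff₀ hp hy, hin]
  nlinarith [mul_le_mul_of_nonneg_left h1 h, mul_nonneg hp.le (sub_nonneg.2 hle)]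

/-- Non-grazing decay integrated over all collisions with fixed `v`: the
substitution `u ↦ halfMap σ u` turns the decay in `v*'` into decay in the
integration variable, and the sphere integral yields the gain `⟨v⟩^{-b}`. -/
lemma grazing_fixed {γ : ℝ} (hγ1 : -3 < γ) (hγ2 : γ ≤ 1) {l : ℝ} (hl : 0 < l) (b : ℝ) :
    ∃ C : ℝ, 0 ≤ C ∧ ∀ v : E3, ∫⁻ w, ∫⁻ σ : S2,
      (if 0 ≤ cosTheta v w σ then ENNReal.ofReal (‖v - w‖ ^ γ * jap (vsP v w σ) ^ (-8 : ℝ) *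
        exp (-l * (jap v ^ b * ((1 - cosTheta v w σ) / 2)))) else 0) ≤
      ENNReal.ofReal (C * jap v ^ (γ - b)) := by
  obtain ⟨C, hC, H⟩ := conv_bound hγ1 hγ2
  have hs := sphC_nonneg
  refine ⟨8 * (2 ^ |γ| * (sphC * 2 / l)) * C, by positivity, fun v => ?_⟩
  have hj := jap_pos v
  set κ := l * jap v ^ b / 2 with hκ
  have hκ0 : 0 < κ := by positivity
  have step1 : ∫⁻ w, ∫⁻ σ : S2,
      (if 0 ≤ cosTheta v w σ then ENNReal.ofReal (‖v - w‖ ^ γ * jap (vsP v w σ) ^ (-8 : ℝ) *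
        exp (-l * (jap v ^ b * ((1 - cosTheta v w σ) / 2)))) else 0) =
      ∫⁻ σ : S2, ∫⁻ u : E3, (if 0 ≤ ⟪u, (σ : E3)⟫ then
        ENNReal.ofReal (‖u‖ ^ γ * jap (v - halfMap σ u) ^ (-8 : ℝ) *
        exp (-κ * (1 - ⟪u, (σ : E3)⟫ / ‖u‖))) else 0) := by
    rw [← lintegral_sub_left_eq_self _ v, lintegral_lintegral_swap]
    · refine lintegral_congr fun σ => lintegral_congr fun u => ?_
      have h1 : vsP v (v - u) σ = v - halfMap σ u := by
        simp only [vsP, halfMap, sub_sub_cancel]; module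
      have h2 : cosTheta v (v - u) σ = ⟪u, (σ : E3)⟫ / ‖u‖ := by
        simp only [cosTheta, sub_sub_cancel]
      have h3 : 0 ≤ ⟪u, (σ : E3)⟫ / ‖u‖ ↔ 0 ≤ ⟪u, (σ : E3)⟫ := by
        rcases eq_or_ne u 0 with rfl | hu
        · simp
        · have := norm_pos_iff.2 hu
          exact ⟨fun h => by simpa using (div_le_div_iff_of_pos_right this).1 ((zero_div _).le.trans h),
            fun h => div_nonneg h this.le⟩
      rw [h1, h2, sub_sub_cancel]
      simp only [h3]
      have h4 : -l * (jap v ^ b * ((1 - ⟪u, (σ : E3)⟫ / ‖u‖) / 2)) =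
          -κ * (1 - ⟪u, (σ : E3)⟫ / ‖u‖) := by rw [hκ]; ring
      rw [h4]
    · refine Measurable.aemeasurable ?_
      simp only [Function.uncurry_def, vsP, cosTheta]
      refine Measurable.ite (measurableSet_le measurable_const (by fun_prop)) (by fun_prop)
        measurable_const
  rw [step1]
  set Hf : S2 → E3 → ℝ≥0∞ := fun σ y => ENNReal.ofReal (2 ^ |γ| *
    (‖y‖ ^ γ * jap (v - y) ^ (-8 : ℝ)) * exp (-κ * (1 - ⟪y, (σ : E3)⟫ / ‖y‖))) with hHf
  have step2 : ∀ σ : S2, ∫⁻ u : E3, (if 0 ≤ ⟪u, (σ : E3)⟫ then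
        ENNReal.ofReal (‖u‖ ^ γ * jap (v - halfMap σ u) ^ (-8 : ℝ) *
        exp (-κ * (1 - ⟪u, (σ : E3)⟫ / ‖u‖))) else 0) ≤ 8 * ∫⁻ y, Hf σ y := by
    intro σ
    refine le_trans ?_ (lintegral_halfMap_le σ (Hf σ))
    rw [← lintegral_indicator (measurableSet_le measurable_const (by fun_prop))]
    refine lintegral_mono fun u => ?_
    simp only [Set.indicator, Set.mem_ofPred_eq]
    split_ifs with h
    · obtain ⟨h1, h2⟩ := halfMap_compare σ u h γ
      refine ENNReal.ofReal_le_ofReal ?_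
      have := jap_pos (v - halfMap σ u)
      rw [← mul_assoc]
      refine mul_le_mul (mul_le_mul_of_nonneg_right h1 (by positivity)) ?_ (by positivity)
        (by positivity)
      refine exp_le_exp.2 ?_
      nlinarith
    · exact le_rfl
  calc _ ≤ ∫⁻ σ : S2, 8 * ∫⁻ y, Hf σ y := lintegral_mono step2
    _ = 8 * ∫⁻ y : E3, ∫⁻ σ : S2, Hf σ y := by
      rw [lintegral_const_mul' _ _ (by norm_num), lintegral_lintegral_swap]
      refine Measurable.aemeasurable ?_
      simp only [Function.uncurry_def, hHf]
      fun_prop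
    _ ≤ 8 * ∫⁻ y : E3, ENNReal.ofReal (2 ^ |γ| * (sphC / κ)) *
        ENNReal.ofReal (‖y‖ ^ γ * jap (v - y) ^ (-8 : ℝ)) := by
      gcongr with y
      have hjy := jap_pos (v - y)
      simp only [hHf]
      calc _ = ENNReal.ofReal (2 ^ |γ| * (‖y‖ ^ γ * jap (v - y) ^ (-8 : ℝ))) *
            ∫⁻ σ : S2, ENNReal.ofReal (exp (-κ * (1 - ⟪y, (σ : E3)⟫ / ‖y‖))) := by
            rw [← lintegral_const_mul' _ _ ENNReal.ofReal_ne_top]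
            refine lintegral_congr fun σ => ?_
            rw [← ENNReal.ofReal_mul (by positivity)]
        _ ≤ ENNReal.ofReal (2 ^ |γ| * (‖y‖ ^ γ * jap (v - y) ^ (-8 : ℝ))) *
            ENNReal.ofReal (sphC / κ) := by
            gcongr
            exact sphere_exp_bound' hκ0 y
        _ = _ := by
            rw [← ENNReal.ofReal_mul (by positivity), ← ENNReal.ofReal_mul (by positivity)]
            congr 1; ring
    _ = 8 * (ENNReal.ofReal (2 ^ |γ| * (sphC / κ)) *
        ∫⁻ w : E3, ENNReal.ofReal (‖v - w‖ ^ γ * jap w ^ (-8 : ℝ))) := by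
      rw [lintegral_const_mul' _ _ ENNReal.ofReal_ne_top,
        ← lintegral_sub_left_eq_self (fun w => ENNReal.ofReal (‖v - w‖ ^ γ * jap w ^ (-8 : ℝ))) v]
      simp only [sub_sub_cancel]
    _ ≤ 8 * (ENNReal.ofReal (2 ^ |γ| * (sphC / κ)) * ENNReal.ofReal (C * jap v ^ γ)) := by
      gcongr
      exact H v
    _ = _ := by
      rw [← ENNReal.ofReal_mul (by positivity),
        show (8 : ℝ≥0∞) = ENNReal.ofReal 8 by simp, ← ENNReal.ofReal_mul (by positivity)]
      congr 1
      rw [rpow_sub hj, hκ]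
      have : jap v ^ b ≠ 0 := by positivity
      field_simp

/-- The companion of `grazing_fixed` in which the weight sits at the post-collision velocity `v'`;
the pre-post-collisional change of variables moves it back to `v`. -/
lemma grazing_swapped {γ : ℝ} (hγ1 : -3 < γ) (hγ2 : γ ≤ 1) {l : ℝ} (hl : 0 < l) (b : ℝ) :
    ∃ C : ℝ, 0 ≤ C ∧ ∀ G : E3 → ℝ≥0∞, Measurable G → ∫⁻ v, ∫⁻ w, ∫⁻ σ : S2,
      ENNReal.ofReal (‖v - w‖ ^ γ * jap (vsP v w σ) ^ (-8 : ℝ) *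
        exp (-l * (jap (vP v w σ) ^ b * ((1 - cosTheta v w σ) / 2)))) * G (vP v w σ) ≤
      ∫⁻ v, ENNReal.ofReal (C * jap v ^ (γ - b)) * G v := by
  obtain ⟨C, hC, H⟩ := conv_bound hγ1 hγ2
  have hs := sphC_nonneg
  refine ⟨sphC * 2 / l * C, by positivity, fun G hG => ?_⟩
  set Φ : E3 × E3 × E3 × E3 → ℝ≥0∞ := fun p =>
    ENNReal.ofReal (‖p.1 - p.2.1‖ ^ γ * jap p.2.2.2 ^ (-8 : ℝ) *
      exp (-l * (jap p.2.2.1 ^ b *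
        ((1 - ⟪p.1 - p.2.1, p.2.2.1 - p.2.2.2⟫ / ‖p.1 - p.2.1‖ ^ 2) / 2)))) * G p.2.2.1 with hΦ
  have hΦm : Measurable Φ := by simp only [hΦ]; fun_prop
  have e := prepost Φ hΦm
  simp only [hΦ, ← cosTheta_eq] at e
  rw [e]
  refine lintegral_mono fun v => ?_
  have hj := jap_pos v
  set κ := l * jap v ^ b / 2 with hκ
  have hκ0 : 0 < κ := by positivity
  calc _ = ∫⁻ w : E3, ENNReal.ofReal (‖v - w‖ ^ γ * jap w ^ (-8 : ℝ)) * G v *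
        ∫⁻ σ : S2, ENNReal.ofReal (exp (-κ * (1 - ⟪v - w, (σ : E3)⟫ / ‖v - w‖))) := by
        refine lintegral_congr fun w => ?_
        have := jap_pos w
        rw [← lintegral_const_mul _ (by fun_prop)]
        refine lintegral_congr fun σ => ?_
        rw [norm_vP_sub_vsP, real_inner_comm, ← cosTheta_eq, mul_right_comm (ENNReal.ofReal _) (G v),
          ← ENNReal.ofReal_mul (by positivity)]
        have h4 : -l * (jap v ^ b * ((1 - cosTheta v w σ) / 2)) =
          -κ * (1 - ⟪v - w, (σ : E3)⟫ / ‖v - w‖) := by rw [hκ, cosTheta]; ring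
        rw [h4]
    _ ≤ ∫⁻ w : E3, ENNReal.ofReal (‖v - w‖ ^ γ * jap w ^ (-8 : ℝ)) * G v *
        ENNReal.ofReal (sphC / κ) := by
        gcongr with w
        exact sphere_exp_bound' hκ0 _
    _ = (∫⁻ w : E3, ENNReal.ofReal (‖v - w‖ ^ γ * jap w ^ (-8 : ℝ))) * G v *
        ENNReal.ofReal (sphC / κ) := by
        rw [lintegral_mul_const _ (by fun_prop), lintegral_mul_const _ (by fun_prop)]
    _ ≤ ENNReal.ofReal (C * jap v ^ γ) * G v * ENNReal.ofReal (sphC / κ) := by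
        gcongr
        exact H v
    _ = _ := by
        rw [mul_right_comm, ← ENNReal.ofReal_mul (by positivity)]
        congr 2
        rw [rpow_sub hj, hκ]
        have : jap v ^ b ≠ 0 := by positivity
        field_simp

/-! ### Bounds for the two gain terms -/

lemma wide_fixed {γ : ℝ} (hγ1 : -3 < γ) (hγ2 : γ ≤ 1) {b : ℝ} (hb2 : b < 2) :
    ∃ C : ℝ, 0 ≤ C ∧ ∀ v : E3, ∫⁻ w, ∫⁻ _σ : S2,
      ENNReal.ofReal (‖v - w‖ ^ γ * (jap v * jap w) ^ (-8 : ℝ)) ≤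
      ENNReal.ofReal (C * jap v ^ (γ - b)) := by
  obtain ⟨C, hC, H⟩ := conv_bound hγ1 hγ2
  set M := (volume : Measure S2).real Set.univ with hM
  refine ⟨C * M, by positivity, fun v => ?_⟩
  have hj := jap_pos v
  have hM' : (volume : Measure S2) Set.univ = ENNReal.ofReal M :=
    (ENNReal.ofReal_toReal (measure_ne_top _ _)).symm
  calc _ = ∫⁻ w : E3, ENNReal.ofReal (jap v ^ (-8 : ℝ) * M) *
        ENNReal.ofReal (‖v - w‖ ^ γ * jap w ^ (-8 : ℝ)) := by
        refine lintegral_congr fun w => ?_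
        have := jap_pos w
        rw [lintegral_const, hM', ← ENNReal.ofReal_mul (by positivity),
          ← ENNReal.ofReal_mul (by positivity), mul_rpow (by positivity) (by positivity)]
        congr 1; ring
    _ ≤ ENNReal.ofReal (jap v ^ (-8 : ℝ) * M) * ENNReal.ofReal (C * jap v ^ γ) := by
        rw [lintegral_const_mul' _ _ ENNReal.ofReal_ne_top]
        gcongr
        exact H v
    _ ≤ _ := by
        rw [← ENNReal.ofReal_mul (by positivity)]
        refine ENNReal.ofReal_le_ofReal ?_
        have : jap v ^ (-8 : ℝ) * jap v ^ γ ≤ jap v ^ (γ - b) := by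
          rw [← rpow_add hj]
          exact rpow_le_rpow_of_exponent_le (one_le_jap v) (by linarith)
        calc _ = C * M * (jap v ^ (-8 : ℝ) * jap v ^ γ) := by ring
          _ ≤ _ := by gcongr

lemma wide_swapped {γ : ℝ} (hγ1 : -3 < γ) (hγ2 : γ ≤ 1) {b : ℝ} (hb2 : b < 2) :
    ∃ C : ℝ, 0 ≤ C ∧ ∀ G : E3 → ℝ≥0∞, Measurable G → ∫⁻ v, ∫⁻ w, ∫⁻ σ : S2,
      ENNReal.ofReal (‖v - w‖ ^ γ * (jap (vP v w σ) * jap (vsP v w σ)) ^ (-8 : ℝ)) *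
        G (vsP v w σ) ≤
      ∫⁻ v, ENNReal.ofReal (C * jap v ^ (γ - b)) * G v := by
  obtain ⟨C, hC, H⟩ := wide_fixed hγ1 hγ2 hb2
  refine ⟨C, hC, fun G hG => ?_⟩
  have e := prepost (fun p : E3 × E3 × E3 × E3 =>
    ENNReal.ofReal (‖p.1 - p.2.1‖ ^ γ * (jap p.2.2.1 * jap p.2.2.2) ^ (-8 : ℝ)) * G p.2.2.2)
    (by fun_prop)
  simp only [norm_vP_sub_vsP] at e
  rw [e, lintegral_lintegral_swap (by fun_prop)]
  refine lintegral_mono fun w => ?_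
  calc _ = (∫⁻ v : E3, ∫⁻ _σ : S2,
        ENNReal.ofReal (‖w - v‖ ^ γ * (jap w * jap v) ^ (-8 : ℝ))) * G w := by
        rw [← lintegral_mul_const _ (by fun_prop)]
        refine lintegral_congr fun v => ?_
        rw [← lintegral_mul_const _ (by fun_prop)]
        refine lintegral_congr fun σ => ?_
        rw [norm_sub_rev, mul_comm (jap v)]
    _ ≤ _ := by gcongr; exact H w

/-- Absolute-value bound for the tested gain operator. The convention that a non-integrable
integral is `0` makes it unconditional. -/
lemma enorm_gain_le (γ : ℝ) {bf : ℝ → ℝ} {K : ℝ} (h0 : ∀ t, 0 ≤ bf t) 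
    (hK : ∀ t ∈ Set.Icc (0 : ℝ) 1, bf t ≤ K) (hneg : ∀ t : ℝ, t < 0 → bf t = 0)
    (f g h : E3 → ℝ) :
    ‖∫ v, Qgain γ bf f g v * h v‖ₑ ≤ ∫⁻ v, ∫⁻ w, ∫⁻ σ : S2,
      (if 0 ≤ cosTheta v w σ then
        ENNReal.ofReal (K * ‖v - w‖ ^ γ * (|f (vsP v w σ)| * |g (vP v w σ)| * |h v|)) else 0) := by
  refine (enorm_integral_le_lintegral_enorm _).trans (lintegral_mono fun v => ?_)
  rw [enorm_mul, Qgain]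
  refine (mul_le_mul_left (enorm_integral_le_lintegral_enorm _) _).trans ?_
  rw [← lintegral_mul_const' _ _ (by simp)]
  refine lintegral_mono fun w => ?_
  refine (mul_le_mul_left (enorm_integral_le_lintegral_enorm _) _).trans ?_
  rw [← lintegral_mul_const' _ _ (by simp)]
  refine lintegral_mono fun σ => ?_
  rw [← enorm_mul, Real.enorm_eq_ofReal_abs]
  split_ifs with hc
  · refine ENNReal.ofReal_le_ofReal ?_
    have hk := hK _ ⟨hc, (abs_le.1 (abs_cosTheta_le v w σ)).2⟩
    have hn : 0 ≤ ‖v - w‖ ^ γ := by positivity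
    rw [abs_mul, abs_mul, abs_mul, abs_mul, abs_of_nonneg (h0 _), abs_of_nonneg hn]
    calc _ = bf (cosTheta v w σ) * (‖v - w‖ ^ γ * (|f (vsP v w σ)| * |g (vP v w σ)| * |h v|)) := by
          ring
      _ ≤ K * (‖v - w‖ ^ γ * (|f (vsP v w σ)| * |g (vP v w σ)| * |h v|)) := by gcongr
      _ = _ := by ring
  · rw [hneg _ (not_le.1 hc)]; simp

lemma maxw_abs (v : E3) : |maxw v| = maxw v := abs_of_pos (maxw_pos v)

/-- Sums the two decoupled contributions: `A` is integrated with `v` fixed, `B` globally. -/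
lemma combine_bounds {p c C₁ C₂ : ℝ} (hc : 0 ≤ c) (h₁ : 0 ≤ C₁) (h₂ : 0 ≤ C₂) {g : E3 → ℝ}
    (hg : Measurable g) {T A B : E3 → E3 → S2 → ℝ≥0∞}
    (hBm : Measurable fun q : E3 × E3 × S2 => B q.1 q.2.1 q.2.2)
    (hT : ∀ v w σ, T v w σ ≤ ENNReal.ofReal c * (A v w σ * ENNReal.ofReal (g v ^ 2) + B v w σ))
    (hA : ∀ v, ∫⁻ w, ∫⁻ σ : S2, A v w σ ≤ ENNReal.ofReal (C₁ * jap v ^ p))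
    (hB : ∫⁻ v, ∫⁻ w, ∫⁻ σ : S2, B v w σ ≤
      ∫⁻ v, ENNReal.ofReal (C₂ * jap v ^ p) * ENNReal.ofReal (g v ^ 2)) :
    ∫⁻ v, ∫⁻ w, ∫⁻ σ : S2, T v w σ ≤ ENNReal.ofReal (c * (C₁ + C₂)) *
      ∫⁻ v, ENNReal.ofReal (jap v ^ p * g v ^ 2) := by
  have m1 : Measurable fun v => ∫⁻ w, ∫⁻ σ : S2, B v w σ := by
    have : Measurable fun q : (E3 × E3) × S2 => B q.1.1 q.1.2 q.2 :=
      hBm.comp (by fun_prop : Measurable fun q : (E3 × E3) × S2 => (q.1.1, q.1.2, q.2))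
    exact Measurable.lintegral_prod_right' (f := fun q : E3 × E3 => ∫⁻ σ : S2, B q.1 q.2 σ)
      this.lintegral_prod_right'
  have m2 : ∀ v, Measurable fun q : E3 × S2 => B v q.1 q.2 := fun v =>
    hBm.comp (by fun_prop : Measurable fun q : E3 × S2 => (v, q.1, q.2))
  have m3 : ∀ v w, Measurable fun σ : S2 => B v w σ := fun v w =>
    (m2 v).comp (by fun_prop : Measurable fun σ : S2 => (w, σ))
  calc _ ≤ ∫⁻ v, ∫⁻ w, ∫⁻ σ : S2,
        ENNReal.ofReal c * (A v w σ * ENNReal.ofReal (g v ^ 2) + B v w σ) :=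
        lintegral_mono fun v => lintegral_mono fun w => lintegral_mono fun σ => hT v w σ
    _ = ENNReal.ofReal c * ((∫⁻ v, (∫⁻ w, ∫⁻ σ : S2, A v w σ) * ENNReal.ofReal (g v ^ 2)) +
        ∫⁻ v, ∫⁻ w, ∫⁻ σ : S2, B v w σ) := by
        rw [← lintegral_add_right _ m1, ← lintegral_const_mul' _ _ ENNReal.ofReal_ne_top]
        refine lintegral_congr fun v => ?_
        rw [← lintegral_mul_const' _ _ ENNReal.ofReal_ne_top,
          ← lintegral_add_right _ (m2 v).lintegral_prod_right',
          ← lintegral_const_mul' _ _ ENNReal.ofReal_ne_top]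
        refine lintegral_congr fun w => ?_
        rw [← lintegral_mul_const' _ _ ENNReal.ofReal_ne_top, ← lintegral_add_right _ (m3 v w),
          ← lintegral_const_mul' _ _ ENNReal.ofReal_ne_top]
    _ ≤ ENNReal.ofReal c *
        ((∫⁻ v, ENNReal.ofReal (C₁ * jap v ^ p) * ENNReal.ofReal (g v ^ 2)) +
          ∫⁻ v, ENNReal.ofReal (C₂ * jap v ^ p) * ENNReal.ofReal (g v ^ 2)) := by
        refine mul_le_mul_right (add_le_add (lintegral_mono fun v => ?_) hB) _
        exact mul_le_mul_left (hA v) _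
    _ = _ := by
        rw [← lintegral_add_right _ (by fun_prop), ← lintegral_const_mul' _ _ ENNReal.ofReal_ne_top,
          ← lintegral_const_mul' _ _ ENNReal.ofReal_ne_top]
        refine lintegral_congr fun v => ?_
        have hj := jap_pos v
        rw [← ENNReal.ofReal_mul (by positivity), ← ENNReal.ofReal_mul (by positivity),
            ← ENNReal.ofReal_add (by positivity) (by positivity),
            ← ENNReal.ofReal_mul (by positivity), ← ENNReal.ofReal_mul (by positivity)]
        congr 1; ring

lemma abs_test (f : E3 → ℝ) (k a b : ℝ) (v : E3) :
    |f v * jap v ^ (2 * k) * exp (2 * a * jap v ^ b)| = |f v| * wt k a b v ^ 2 := by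
  have := jap_pos v
  rw [wt_sq, mul_assoc, abs_mul, abs_of_nonneg (by positivity :
    0 ≤ jap v ^ (2 * k) * exp (2 * a * jap v ^ b))]

lemma gain_mu_f {γ k a b : ℝ} (hγ1 : -3 < γ) (hγ2 : γ ≤ 1) (ha : 0 < a)
    (hb1 : 0 < b) (hb2 : b < 2) {bf : ℝ → ℝ} {K : ℝ} (hK0 : 0 < K) (h0 : ∀ t, 0 ≤ bf t)
    (hK : ∀ t ∈ Set.Icc (0 : ℝ) 1, bf t ≤ K) (hneg : ∀ t : ℝ, t < 0 → bf t = 0) :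
    ∃ C : ℝ, 0 ≤ C ∧ ∀ f : E3 → ℝ, Measurable f →
      ‖∫ v, Qgain γ bf maxw f v * (f v * jap v ^ (2 * k) * exp (2 * a * jap v ^ b))‖ₑ ≤
        ENNReal.ofReal C *
          ∫⁻ v, ENNReal.ofReal (jap v ^ (γ - b) * (|f v| * wt k a b v) ^ 2) := by
  obtain ⟨C₀, hC₀, H₀⟩ := pointwise_mu_f k ha hb1 hb2
  have hl : 0 < a * b / 8 := by positivity
  obtain ⟨C₁, hC₁, H₁⟩ := grazing_fixed hγ1 hγ2 hl b
  obtain ⟨C₂, hC₂, H₂⟩ := grazing_swapped hγ1 hγ2 hl b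
  refine ⟨K * C₀ * (C₁ + C₂), by positivity, fun f hf => ?_⟩
  have hwm : Measurable (wt k a b) := by unfold wt; fun_prop
  have hgm : Measurable fun v => |f v| * wt k a b v := by
    simp only [← Real.norm_eq_abs]; fun_prop
  refine (enorm_gain_le γ h0 hK hneg _ _ _).trans ?_
  refine combine_bounds (A := fun v w σ =>
    if 0 ≤ cosTheta v w σ then ENNReal.ofReal (‖v - w‖ ^ γ * jap (vsP v w σ) ^ (-8 : ℝ) *
        exp (-(a * b / 8) * (jap v ^ b * ((1 - cosTheta v w σ) / 2)))) else 0)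
    (B := fun v w σ =>
      ENNReal.ofReal (‖v - w‖ ^ γ * jap (vsP v w σ) ^ (-8 : ℝ) *
        exp (-(a * b / 8) * (jap (vP v w σ) ^ b * ((1 - cosTheta v w σ) / 2))))
          * ENNReal.ofReal ((|f (vP v w σ)| * wt k a b (vP v w σ)) ^ 2))
    (by positivity) hC₁ hC₂ hgm ?_ (fun v w σ => ?_) H₁
    (H₂ (fun v => ENNReal.ofReal ((|f v| * wt k a b v) ^ 2)) (by fun_prop))
  · simp only [vP, vsP, cosTheta]
    fun_prop
  · split_ifs with hc
    · have hj := jap_pos (vsP v w σ)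
      have hwv := wt_pos k a b v
      have hn : 0 ≤ ‖v - w‖ ^ γ := by positivity
      rw [← ENNReal.ofReal_mul (by positivity), ← ENNReal.ofReal_mul (by positivity),
        ← ENNReal.ofReal_add (by positivity) (by positivity),
        ← ENNReal.ofReal_mul (by positivity)]
      refine ENNReal.ofReal_le_ofReal ?_
      rw [abs_test, maxw_abs]
      have := mul_le_mul_of_nonneg_left (H₀ f v w σ hc) (mul_nonneg hK0.le hn)
      refine (le_of_eq ?_).trans (this.trans (le_of_eq ?_)) <;> ring
    · exact zero_le

lemma gain_f_mu {γ k a b : ℝ} (hγ1 : -3 < γ) (hγ2 : γ ≤ 1) (ha : 0 < a)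
    (hb1 : 0 < b) (hb2 : b < 2) {bf : ℝ → ℝ} {K : ℝ} (hK0 : 0 < K) (h0 : ∀ t, 0 ≤ bf t)
    (hK : ∀ t ∈ Set.Icc (0 : ℝ) 1, bf t ≤ K) (hneg : ∀ t : ℝ, t < 0 → bf t = 0) :
    ∃ C : ℝ, 0 ≤ C ∧ ∀ f : E3 → ℝ, Measurable f →
      ‖∫ v, Qgain γ bf f maxw v * (f v * jap v ^ (2 * k) * exp (2 * a * jap v ^ b))‖ₑ ≤
        ENNReal.ofReal C *
          ∫⁻ v, ENNReal.ofReal (jap v ^ (γ - b) * (|f v| * wt k a b v) ^ 2) := by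
  obtain ⟨C₀, hC₀, H₀⟩ := pointwise_f_mu k ha hb1 hb2
  obtain ⟨C₁, hC₁, H₁⟩ := wide_fixed hγ1 hγ2 hb2
  obtain ⟨C₂, hC₂, H₂⟩ := wide_swapped hγ1 hγ2 hb2
  refine ⟨K * C₀ * (C₁ + C₂), by positivity, fun f hf => ?_⟩
  have hwm : Measurable (wt k a b) := by unfold wt; fun_prop
  have hgm : Measurable fun v => |f v| * wt k a b v := by
    simp only [← Real.norm_eq_abs]; fun_prop
  refine (enorm_gain_le γ h0 hK hneg _ _ _).trans ?_
  refine combine_bounds (A := fun v w _ =>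
    ENNReal.ofReal (‖v - w‖ ^ γ * (jap v * jap w) ^ (-8 : ℝ)))
    (B := fun v w σ =>
      ENNReal.ofReal (‖v - w‖ ^ γ * (jap (vP v w σ) * jap (vsP v w σ)) ^ (-8 : ℝ))
          * ENNReal.ofReal ((|f (vsP v w σ)| * wt k a b (vsP v w σ)) ^ 2))
    (by positivity) hC₁ hC₂ hgm ?_ (fun v w σ => ?_) H₁
    (H₂ (fun v => ENNReal.ofReal ((|f v| * wt k a b v) ^ 2)) (by fun_prop))
  · simp only [vP, vsP]
    fun_prop
  · split_ifs with hc
    · have hj := jap_pos (vsP v w σ)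
      have hj' := jap_pos (vP v w σ)
      have hjv := jap_pos v
      have hjw := jap_pos w
      have hwv := wt_pos k a b v
      have hn : 0 ≤ ‖v - w‖ ^ γ := by positivity
      rw [← ENNReal.ofReal_mul (by positivity), ← ENNReal.ofReal_mul (by positivity),
        ← ENNReal.ofReal_add (by positivity) (by positivity),
        ← ENNReal.ofReal_mul (by positivity)]
      refine ENNReal.ofReal_le_ofReal ?_
      rw [abs_test, maxw_abs]
      have := mul_le_mul_of_nonneg_left (H₀ f v w σ hc) (mul_nonneg hK0.le hn)
      refine (le_of_eq ?_).trans (this.trans (le_of_eq ?_)) <;> ring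
    · exact zero_le

/-! ### Cauchy–Schwarz and the estimate -/

lemma lintegral_sq_eq_expNorm {q a b : ℝ} {f : E3 → ℝ}
    (hf : Integrable fun v : E3 => f v ^ 2 * jap v ^ (2 * q) * exp (2 * a * jap v ^ b)) :
    (∫⁻ v, ENNReal.ofReal (|f v| * wt q a b v) ^ (2 : ℝ)) ^ (1 / 2 : ℝ) =
      ENNReal.ofReal (expNorm q a b f) := by
  have h0 : ∀ v : E3, 0 ≤ f v ^ 2 * jap v ^ (2 * q) * exp (2 * a * jap v ^ b) := fun v => by
    have := jap_pos v
    positivity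
  have h1 : ∫⁻ v, ENNReal.ofReal (|f v| * wt q a b v) ^ (2 : ℝ) =
      ENNReal.ofReal (expSq q a b f) := by
    rw [expSq, ofReal_integral_eq_lintegral_ofReal hf (Filter.Eventually.of_forall h0)]
    refine lintegral_congr fun v => ?_
    have := wt_pos q a b v
    rw [ENNReal.ofReal_rpow_of_nonneg (by positivity) (by norm_num), rpow_two, mul_pow, wt_sq,
      sq_abs, ← mul_assoc (f v ^ 2)]
  have h2 : 0 ≤ expSq q a b f := integral_nonneg h0
  rw [h1, ENNReal.ofReal_rpow_of_nonneg h2 (by norm_num), expNorm, sqrt_eq_rpow]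

/-- Cauchy–Schwarz, after `⟨v⟩^{γ-b} ≤ ⟨v⟩^{γ-b(γ+3)/4}`, which holds because `γ + 3 ≤ 4`. -/
lemma lintegral_le_expNorm_mul {γ k a b : ℝ} (hγ2 : γ ≤ 1) (hb1 : 0 < b) {f : E3 → ℝ}
    (hf : Measurable f)
    (h₁ : Integrable fun v : E3 =>
      f v ^ 2 * jap v ^ (2 * (k + γ / 2)) * exp (2 * a * jap v ^ b))
    (h₂ : Integrable fun v : E3 =>
      f v ^ 2 * jap v ^ (2 * (k + γ / 2 - b * (γ + 3) / 4)) * exp (2 * a * jap v ^ b)) :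
    ∫⁻ v, ENNReal.ofReal (jap v ^ (γ - b) * (|f v| * wt k a b v) ^ 2) ≤
      ENNReal.ofReal (expNorm (k + γ / 2) a b f *
        expNorm (k + γ / 2 - b * (γ + 3) / 4) a b f) := by
  have hm : ∀ q, Measurable fun v => |f v| * wt q a b v := fun q => by
    unfold wt; simp only [← Real.norm_eq_abs]; fun_prop
  rw [ENNReal.ofReal_mul (by unfold expNorm; positivity), ← lintegral_sq_eq_expNorm h₁,
    ← lintegral_sq_eq_expNorm h₂]
  refine le_trans (lintegral_mono fun v => ?_)
    (ENNReal.lintegral_mul_le_Lp_mul_Lq volume Real.HolderConjugate.two_two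
      (hm _).ennreal_ofReal.aemeasurable (hm _).ennreal_ofReal.aemeasurable)
  have hj := jap_pos v
  have hq := wt_pos (k + γ / 2) a b v
  simp only [Pi.mul_apply]
  rw [← ENNReal.ofReal_mul (by positivity)]
  refine ENNReal.ofReal_le_ofReal ?_
  rw [mul_pow, wt_sq]
  have e1 : jap v ^ (γ - b) * jap v ^ (2 * k) ≤
      jap v ^ (k + γ / 2) * jap v ^ (k + γ / 2 - b * (γ + 3) / 4) := by
    rw [← rpow_add hj, ← rpow_add hj]
    refine rpow_le_rpow_of_exponent_le (one_le_jap v) ?_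
    nlinarith
  have e2 : exp (2 * a * jap v ^ b) = exp (a * jap v ^ b) * exp (a * jap v ^ b) := by
    rw [← exp_add]; congr 1; ring
  rw [e2]
  unfold wt
  calc _ = (jap v ^ (γ - b) * jap v ^ (2 * k)) *
        (|f v| ^ 2 * (exp (a * jap v ^ b) * exp (a * jap v ^ b))) := by ring
    _ ≤ (jap v ^ (k + γ / 2) * jap v ^ (k + γ / 2 - b * (γ + 3) / 4)) *
        (|f v| ^ 2 * (exp (a * jap v ^ b) * exp (a * jap v ^ b))) := by gcongr
    _ = _ := by ring

lemma abs_le_of_enorm_le {x C Y : ℝ} {L : ℝ≥0∞} (hC : 0 ≤ C) (hY : 0 ≤ Y)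
    (h : ‖x‖ₑ ≤ ENNReal.ofReal C * L) (hL : L ≤ ENNReal.ofReal Y) : |x| ≤ C * Y := by
  have := h.trans (mul_le_mul_right hL _)
  rw [← ENNReal.ofReal_mul hC, Real.enorm_eq_ofReal_abs] at this
  exact (ENNReal.ofReal_le_ofReal_iff (by positivity)).1 this

/-- exponential-weight estimate for the gain parts of the linearized operator. -/
theorem stmt12 (γ k a b : ℝ) (hγ1 : -3 < γ) (hγ2 : γ ≤ 1) (ha : 0 < a)
    (hb1 : 0 < b) (hb2 : b < 2) (bf : ℝ → ℝ) (hbf : gradCutoff bf) :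
    ∃ C : ℝ, 0 < C ∧ ∀ f : E3 → ℝ, Measurable f →
      -- absolute convergence of the triple integral for (Q⁺(μ,f), f⟨v⟩^{2k}e^{2a⟨v⟩^b})
      Integrable (fun p : E3 × E3 × S2 =>
        ‖p.1 - p.2.1‖ ^ γ * bf (cosTheta p.1 p.2.1 p.2.2) *
          maxw (vsP p.1 p.2.1 p.2.2) * f (vP p.1 p.2.1 p.2.2) * f p.1 *
            jap p.1 ^ (2 * k) * Real.exp (2 * a * jap p.1 ^ b)) →
      -- absolute convergence of the triple integral for (Q⁺(f,μ), f⟨v⟩^{2k}e^{2a⟨v⟩^b})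
      Integrable (fun p : E3 × E3 × S2 =>
        ‖p.1 - p.2.1‖ ^ γ * bf (cosTheta p.1 p.2.1 p.2.2) *
          f (vsP p.1 p.2.1 p.2.2) * maxw (vP p.1 p.2.1 p.2.2) * f p.1 *
            jap p.1 ^ (2 * k) * Real.exp (2 * a * jap p.1 ^ b)) →
      -- convergence of the exponentially weighted norms on the right-hand side
      Integrable (fun v : E3 =>
        f v ^ 2 * jap v ^ (2 * (k + γ / 2)) * Real.exp (2 * a * jap v ^ b)) →
      Integrable (fun v : E3 =>
        f v ^ 2 * jap v ^ (2 * (k + γ / 2 - b * (γ + 3) / 4)) * Real.exp (2 * a * jap v ^ b)) →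
      |∫ v : E3, Qgain γ bf maxw f v * f v * jap v ^ (2 * k) * Real.exp (2 * a * jap v ^ b)| +
        |∫ v : E3, Qgain γ bf f maxw v * f v * jap v ^ (2 * k) * Real.exp (2 * a * jap v ^ b)| ≤
        C * expNorm (k + γ / 2) a b f * expNorm (k + γ / 2 - b * (γ + 3) / 4) a b f := by
  obtain ⟨-, h0, ⟨K, hK0, hK⟩, hneg⟩ := hbf
  have hKi : 0 < K⁻¹ := inv_pos.2 hK0
  obtain ⟨C₁, hC₁, H₁⟩ :=
    gain_mu_f (k := k) hγ1 hγ2 ha hb1 hb2 hKi h0 (fun t ht => (hK t ht).2) hneg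
  obtain ⟨C₂, hC₂, H₂⟩ :=
    gain_f_mu (k := k) hγ1 hγ2 ha hb1 hb2 hKi h0 (fun t ht => (hK t ht).2) hneg
  refine ⟨C₁ + C₂ + 1, by positivity, fun f hf _ _ i₁ i₂ => ?_⟩
  have hL := lintegral_le_expNorm_mul (γ := γ) (k := k) hγ2 hb1 hf i₁ i₂
  have hY : 0 ≤ expNorm (k + γ / 2) a b f * expNorm (k + γ / 2 - b * (γ + 3) / 4) a b f := by
    unfold expNorm; positivity
  have b₁ := abs_le_of_enorm_le hC₁ hY (H₁ f hf) hL
  have b₂ := abs_le_of_enorm_le hC₂ hY (H₂ f hf) hL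
  simp only [← mul_assoc] at b₁ b₂ hY ⊢
  nlinarith

end
end

section
/- Let −3 < γ ≤ 1, k ≥ 0, a > 0 and b ∈ (0,2). Then there exist constants C₁ > 0 and C_{k,a,b} > 0 such that for all measurable f : ℝ³ → ℝ for which all integrals below converge absolutely, −∫_{ℝ³} Q^−(μ, f)(v) f(v) ⟨v⟩^{2k} e^{2a⟨v⟩^b} dv − ∫_{ℝ³} Q^−(f, μ)(v) f(v) ⟨v⟩^{2k} e^{2a⟨v⟩^b} dv ≤ −C₁ ‖f‖²_{L²_{k+γ/2, a, b}} + C_{k,a,b} ‖f‖²_{L²_3}. -/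
/-!
The first loss term is coercive and the second is of lower order.

*Coercivity.* With `μ` in the integrated slot the first integral is `∫ ν f² W`, where `W` is the
weight and `ν(v) = ∫∫ |v - w|^γ b μ(w) dσ dw`. For `w` with `1 ≤ |w| ≤ 2` and `⟪v, w⟫ ≤ 0` one has
`⟨v⟩ ≤ |v - w| ≤ 3⟨v⟩`, so `|v - w|^γ` is comparable to `⟨v⟩^γ` for either sign of `γ`; by central
symmetry such `w` fill at least half of the annulus. Likewise `b ≥ K` on a closed hemisphere, which
carries at least half of the surface measure. Hence `ν(v) ≥ c ⟨v⟩^γ` (`frequency_lower`,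
`loss_lower`).

*Cross term.* In the second integral the Maxwellian sits at the same velocity as the exponential
weight and, since `b < 2`, absorbs it: `μ W ≤ M ⟨v⟩⁻⁵` (`maxw_weight_bound`). Using
`|f(v) f(w)| ≤ ⟨w⟩⁵ f(w)² + ⟨w⟩⁻⁵ f(v)²`, both resulting double integrals are controlled by the
single estimate `∫ |v - w|^γ ⟨v⟩⁻⁵ dv ≤ C ⟨w⟩` (`schur_bound`), valid for `-3 < γ ≤ 1`: the
singularity is integrable on the unit ball and `|v - w|^γ ≤ 2⟨v⟩⟨w⟩` outside it. This gives the
bound by `‖f‖²_{L²_3}` (`loss_upper`).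
-/

open MeasureTheory Real
open scoped ENNReal RealInnerProductSpace Classical

noncomputable section

/-! ### Weights and kernel estimates -/

instance instFiniteS2 : IsFiniteMeasure (volume : Measure S2) :=
  inferInstanceAs (IsFiniteMeasure ((volume : Measure E3).toSphere))

lemma norm_le_jap (v : E3) : ‖v‖ ≤ jap v := Real.le_sqrt_of_sq_le (by linarith)

@[fun_prop]
lemma measurable_maxw : Measurable maxw := by unfold maxw; fun_prop

/-- On `[1, ∞)`, a power times a stretched exponential of exponent `b < 2` is absorbed by a
Gaussian. -/
lemma gaussian_absorbs (s a b : ℝ) (hs : 0 ≤ s) (ha : 0 < a) (hb1 : 0 < b) (hb2 : b < 2) :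
    ∃ M : ℝ, 0 < M ∧ ∀ x : ℝ, 1 ≤ x →
      x ^ s * Real.exp (2 * a * x ^ b) * Real.exp (-x ^ 2 / 2) ≤ M := by
  have h1 : ∀ᶠ x : ℝ in Filter.atTop, x ^ (-(2 - b)) < 1 / (8 * a) :=
    (tendsto_rpow_neg_atTop (by linarith)).eventually (gt_mem_nhds (by positivity))
  have h2 : ∀ᶠ x : ℝ in Filter.atTop, x ^ s * Real.exp (-(1 / 4) * x) < 1 :=
    (tendsto_rpow_mul_exp_neg_mul_atTop_nhds_zero s (1 / 4) (by norm_num)).eventually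
      (gt_mem_nhds one_pos)
  obtain ⟨R, hR⟩ := Filter.eventually_atTop.1 (h1.and h2)
  have hR0 : 0 ≤ |R| := abs_nonneg R
  refine ⟨|R| ^ s * Real.exp (2 * a * |R| ^ b) + 1, by positivity, fun x hx => ?_⟩
  have hx0 : 0 < x := by linarith
  rcases le_total x |R| with h | h
  · have e1 : Real.exp (-x ^ 2 / 2) ≤ 1 := Real.exp_le_one_iff.2 (by nlinarith)
    calc x ^ s * Real.exp (2 * a * x ^ b) * Real.exp (-x ^ 2 / 2)
        ≤ x ^ s * Real.exp (2 * a * x ^ b) * 1 := by gcongr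
      _ ≤ |R| ^ s * Real.exp (2 * a * |R| ^ b) := by rw [mul_one]; gcongr
      _ ≤ _ := by linarith
  · obtain ⟨k1, k2⟩ := hR x ((le_abs_self R).trans h)
    have e1 : 2 * a * x ^ b ≤ x ^ 2 / 4 := by
      have : x ^ b = x ^ (-(2 - b)) * x ^ 2 := by
        rw [← Real.rpow_natCast x 2, ← Real.rpow_add hx0]; congr 1; push_cast; ring
      rw [this]
      calc 2 * a * (x ^ (-(2 - b)) * x ^ 2) ≤ 2 * a * (1 / (8 * a) * x ^ 2) := by gcongr
        _ = x ^ 2 / 4 := by field_simp; norm_num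
    have e2 : Real.exp (2 * a * x ^ b) * Real.exp (-x ^ 2 / 2) ≤ Real.exp (-(1 / 4) * x) := by
      rw [← Real.exp_add]; apply Real.exp_le_exp.2; nlinarith
    calc x ^ s * Real.exp (2 * a * x ^ b) * Real.exp (-x ^ 2 / 2)
        = x ^ s * (Real.exp (2 * a * x ^ b) * Real.exp (-x ^ 2 / 2)) := by ring
      _ ≤ x ^ s * Real.exp (-(1 / 4) * x) := by gcongr
      _ ≤ 1 := k2.le
      _ ≤ _ := by
        have : 0 ≤ |R| ^ s * Real.exp (2 * a * |R| ^ b) := by positivity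
        linarith

/-- The Maxwellian absorbs the full exponential weight and leaves the decay `⟨v⟩⁻⁵` needed in the
Schur test. -/
lemma maxw_weight_bound (k a b : ℝ) (hk : 0 ≤ k) (ha : 0 < a) (hb1 : 0 < b) (hb2 : b < 2) :
    ∃ M : ℝ, 0 < M ∧ ∀ v : E3,
      maxw v * jap v ^ (2 * k) * Real.exp (2 * a * jap v ^ b) ≤ M * jap v ^ (-5 : ℝ) := by
  obtain ⟨M, hM, h⟩ := gaussian_absorbs (2 * k + 5) a b (by linarith) ha hb1 hb2
  refine ⟨(2 * π) ^ (-(3 : ℝ) / 2) * Real.exp (1 / 2) * M, by positivity, fun v => ?_⟩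
  have hj := jap_pos v
  have e1 : Real.exp (-‖v‖ ^ 2 / 2) = Real.exp (1 / 2) * Real.exp (-jap v ^ 2 / 2) := by
    rw [← Real.exp_add, jap_sq]; congr 1; ring
  have e2 : jap v ^ (2 * k) = jap v ^ (2 * k + 5) * jap v ^ (-5 : ℝ) := by
    rw [← Real.rpow_add hj]; congr 1; ring
  rw [maxw, e1, e2]
  calc _ = (2 * π) ^ (-(3 : ℝ) / 2) * Real.exp (1 / 2) *
        (jap v ^ (2 * k + 5) * Real.exp (2 * a * jap v ^ b) * Real.exp (-jap v ^ 2 / 2)) *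
          jap v ^ (-5 : ℝ) := by ring
    _ ≤ _ := by gcongr; exact h _ (one_le_jap v)

/-- A power `|u|^γ` with `γ > -3` is integrable on the unit ball of `ℝ³`. -/
lemma lintegral_ball_rpow (γ : ℝ) (hγ : -3 < γ) :
    ∫⁻ u : E3, ENNReal.ofReal ((Set.Iio (1 : ℝ)).indicator (fun r => r ^ γ) ‖u‖) < ⊤ := by
  have : Integrable (fun u : E3 => (Set.Iio (1 : ℝ)).indicator (fun r => r ^ γ) ‖u‖) := by
    rw [integrable_fun_norm_addHaar (volume : Measure E3)
      (f := (Set.Iio (1 : ℝ)).indicator (fun r => r ^ γ))]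
    have h1 : IntegrableOn (fun y : ℝ => y ^ (γ + 2)) (Set.Ioo 0 1) :=
      (intervalIntegral.integrableOn_Ioo_rpow_iff one_pos).2 (by linarith)
    have h2 : IntegrableOn ((Set.Iio (1 : ℝ)).indicator (fun y : ℝ => y ^ (γ + 2)))
        (Set.Ioi 0) := by
      rw [IntegrableOn, integrable_indicator_iff measurableSet_Iio, IntegrableOn,
        Measure.restrict_restrict measurableSet_Iio]
      rwa [Set.inter_comm, Set.Ioi_inter_Iio]
    refine h2.congr_fun (fun y hy => ?_) measurableSet_Ioi
    have hy : 0 < y := hy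
    by_cases h : y < 1
    · simp only [Set.indicator, Set.mem_Iio, h, if_true, finrank_euclideanSpace, Fintype.card_fin,
        smul_eq_mul]
      rw [← Real.rpow_natCast y (3 - 1), ← Real.rpow_add hy]; congr 1; push_cast; ring
    · simp [Set.indicator, h]
  have h := this.2
  rw [hasFiniteIntegral_iff_norm] at h
  refine lt_of_le_of_lt (lintegral_mono fun u => ENNReal.ofReal_le_ofReal (le_abs_self _)) h

/-- Convolution of the kinetic factor with `⟨v⟩⁻⁵` grows at most like `⟨w⟩`. -/
lemma schur_bound (γ : ℝ) (hγ1 : -3 < γ) (hγ2 : γ ≤ 1) :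
    ∃ C : ℝ, 0 < C ∧ ∀ w : E3,
      ∫⁻ v : E3, ENNReal.ofReal (‖v - w‖ ^ γ * jap v ^ (-5 : ℝ)) ≤ ENNReal.ofReal (C * jap w) := by
  set I1 := ∫⁻ u : E3, ENNReal.ofReal ((Set.Iio (1 : ℝ)).indicator (fun r => r ^ γ) ‖u‖) with hI1
  have h1 : I1 ≠ ⊤ := (lintegral_ball_rpow γ hγ1).ne
  set I2 := ∫⁻ v : E3, ENNReal.ofReal (jap v ^ (-4 : ℝ)) with hI2
  have h2 : I2 ≠ ⊤ := by
    have hi : Integrable (fun v : E3 => (1 + ‖v‖ ^ 2) ^ (-(4 : ℝ) / 2)) :=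
      integrable_rpow_neg_one_add_norm_sq (by simp; norm_num)
    have he : (fun v : E3 => jap v ^ (-4 : ℝ)) = fun v : E3 => (1 + ‖v‖ ^ 2) ^ (-(4 : ℝ) / 2) := by
      ext v
      rw [← jap_sq, ← Real.rpow_natCast (jap v) 2, ← Real.rpow_mul (jap_pos v).le]
      norm_num
    rw [← he] at hi
    have h := hi.2
    rw [hasFiniteIntegral_iff_norm] at h
    exact (lt_of_le_of_lt (lintegral_mono fun u => ENNReal.ofReal_le_ofReal (le_abs_self _)) h).ne
  refine ⟨I1.toReal + 2 * I2.toReal + 1, by positivity, fun w => ?_⟩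
  have hw := one_le_jap w
  have hpt : ∀ v : E3, ‖v - w‖ ^ γ * jap v ^ (-5 : ℝ) ≤
      (Set.Iio (1 : ℝ)).indicator (fun r => r ^ γ) ‖v - w‖ + 2 * jap w * jap v ^ (-4 : ℝ) := by
    intro v
    have hv := one_le_jap v
    have hv0 := jap_pos v
    by_cases h : ‖v - w‖ < 1
    · have : jap v ^ (-5 : ℝ) ≤ 1 := Real.rpow_le_one_of_one_le_of_nonpos hv (by norm_num)
      have h3 : (0 : ℝ) ≤ 2 * jap w * jap v ^ (-4 : ℝ) := by positivity
      have h4 : 0 ≤ ‖v - w‖ ^ γ := by positivity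
      simp only [Set.indicator, Set.mem_Iio, h, if_true]
      nlinarith
    · simp only [Set.indicator, Set.mem_Iio, h, if_false, zero_add]
      have h4 : ‖v - w‖ ^ γ ≤ 2 * jap w * jap v := by
        calc ‖v - w‖ ^ γ ≤ ‖v - w‖ ^ (1 : ℝ) :=
              Real.rpow_le_rpow_of_exponent_le (not_lt.1 h) hγ2
          _ ≤ ‖v‖ + ‖w‖ := by rw [Real.rpow_one]; exact norm_sub_le v w
          _ ≤ jap v + jap w := add_le_add (norm_le_jap v) (norm_le_jap w)
          _ ≤ _ := by nlinarith
      have h5 : jap v ^ (-4 : ℝ) = jap v * jap v ^ (-5 : ℝ) := by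
        rw [← Real.rpow_one_add' hv0.le (by norm_num)]; norm_num
      rw [h5]
      calc ‖v - w‖ ^ γ * jap v ^ (-5 : ℝ) ≤ 2 * jap w * jap v * jap v ^ (-5 : ℝ) := by gcongr
        _ = _ := by ring
  calc ∫⁻ v : E3, ENNReal.ofReal (‖v - w‖ ^ γ * jap v ^ (-5 : ℝ))
      ≤ ∫⁻ v : E3, (ENNReal.ofReal ((Set.Iio (1 : ℝ)).indicator (fun r => r ^ γ) ‖v - w‖) +
          ENNReal.ofReal (2 * jap w) * ENNReal.ofReal (jap v ^ (-4 : ℝ))) := by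
        refine lintegral_mono fun v => ?_
        rw [← ENNReal.ofReal_mul (by positivity)]
        exact (ENNReal.ofReal_le_ofReal (hpt v)).trans ENNReal.ofReal_add_le
    _ = I1 + ENNReal.ofReal (2 * jap w) * I2 := by
        rw [lintegral_add_right _ (by fun_prop), lintegral_const_mul _ (by fun_prop),
          lintegral_sub_right_eq_self
            (fun u : E3 => ENNReal.ofReal ((Set.Iio (1 : ℝ)).indicator (fun r => r ^ γ) ‖u‖)) w]
    _ = ENNReal.ofReal (I1.toReal + 2 * jap w * I2.toReal) := by
        rw [ENNReal.ofReal_add (by positivity) (by positivity),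
          ENNReal.ofReal_mul (p := 2 * jap w) (by positivity), ENNReal.ofReal_toReal h1, ENNReal.ofReal_toReal h2]
    _ ≤ _ := by
        apply ENNReal.ofReal_le_ofReal
        have := ENNReal.toReal_nonneg (a := I1)
        nlinarith

/-! ### Lower bound for the collision frequency -/

open scoped Pointwise in
/-- The surface measure is invariant under the antipodal map. -/
lemma sphere_neg_preimage {s : Set S2} (hs : MeasurableSet s) :
    volume ((fun σ : S2 => -σ) ⁻¹' s) = volume s := by
  have hm : MeasurableSet ((fun σ : S2 => -σ) ⁻¹' s) := continuous_neg.measurable hs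
  change (volume : Measure E3).toSphere _ = (volume : Measure E3).toSphere _
  rw [Measure.toSphere_apply' _ hm, Measure.toSphere_apply' _ hs]
  congr 1
  rw [← Measure.measure_preimage_neg volume (Set.Ioo (0 : ℝ) 1 • (Subtype.val '' s : Set E3))]
  congr 1
  ext x
  simp only [Set.mem_smul, Set.mem_image, Set.mem_preimage]
  constructor
  · rintro ⟨r, hr, y, ⟨σ, hσ, rfl⟩, rfl⟩
    exact ⟨r, hr, _, ⟨-σ, hσ, rfl⟩, by simp⟩
  · rintro ⟨r, hr, y, ⟨σ, hσ, rfl⟩, h⟩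
    refine ⟨r, hr, _, ⟨-σ, by simpa using hσ, rfl⟩, ?_⟩
    rw [← neg_neg x, ← h]; simp

/-- By central symmetry every closed hemisphere carries at least half of the total mass. -/
lemma hemisphere_mass : ∃ m : ℝ, 0 < m ∧ ∀ u : E3,
    ENNReal.ofReal m ≤ volume {σ : S2 | 0 ≤ ⟪u, (σ : E3)⟫} := by
  have hne : (volume : Measure S2) Set.univ ≠ 0 := by
    change (volume : Measure E3).toSphere Set.univ ≠ 0
    rw [Measure.measure_univ_ne_zero]
    exact Measure.toSphere_ne_zero _
  have hfin : (volume : Measure S2) Set.univ ≠ ⊤ := measure_ne_top _ _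
  refine ⟨((volume : Measure S2) Set.univ).toReal / 2,
    half_pos (ENNReal.toReal_pos hne hfin), fun u => ?_⟩
  set H := {σ : S2 | 0 ≤ ⟪u, (σ : E3)⟫} with hH
  have hm : MeasurableSet H := measurableSet_le measurable_const (by fun_prop)
  have hcov : (Set.univ : Set S2) ⊆ H ∪ (fun σ : S2 => -σ) ⁻¹' H := by
    intro σ _
    rcases le_total 0 ⟪u, (σ : E3)⟫ with h | h
    · exact Or.inl h
    · right; simpa [hH] using h
  have h := (measure_mono (μ := (volume : Measure S2)) hcov).trans (measure_union_le _ _)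
  rw [sphere_neg_preimage hm, ← two_mul] at h
  rw [ENNReal.ofReal_div_of_pos two_pos, ENNReal.ofReal_toReal hfin]
  refine ENNReal.div_le_of_le_mul ?_
  rw [mul_comm]; simpa using h

/-- The velocities in an annulus at an angle of at least `π/2` to `v`: at least half the annulus. -/
lemma annulus_mass : ∃ m : ℝ, 0 < m ∧ ∀ v : E3,
    ENNReal.ofReal m ≤ volume {w : E3 | ⟪v, w⟫ ≤ 0 ∧ 1 ≤ ‖w‖ ∧ ‖w‖ ≤ 2} := by
  set A := {w : E3 | 1 ≤ ‖w‖ ∧ ‖w‖ ≤ 2} with hA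
  have hfin : volume A ≠ ⊤ := by
    refine ((measure_mono (fun w hw => ?_)).trans_lt
      (measure_closedBall_lt_top (x := (0 : E3)) (r := 2))).ne
    simpa using hw.2
  have hne : volume A ≠ 0 := by
    have ho : IsOpen {w : E3 | 1 < ‖w‖ ∧ ‖w‖ < 2} :=
      (isOpen_lt continuous_const continuous_norm).inter
        (isOpen_lt continuous_norm continuous_const)
    have hn : {w : E3 | 1 < ‖w‖ ∧ ‖w‖ < 2}.Nonempty := by
      refine ⟨EuclideanSpace.single 0 (3 / 2), ?_⟩
      change 1 < ‖_‖ ∧ ‖_‖ < 2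
      rw [PiLp.norm_single]; norm_num
    exact ((ho.measure_pos volume hn).trans_le
      (measure_mono fun w (hw : 1 < ‖w‖ ∧ ‖w‖ < 2) => (⟨hw.1.le, hw.2.le⟩ : 1 ≤ ‖w‖ ∧ ‖w‖ ≤ 2))).ne'
  refine ⟨(volume A).toReal / 2, half_pos (ENNReal.toReal_pos hne hfin), fun v => ?_⟩
  set H := {w : E3 | ⟪v, w⟫ ≤ 0 ∧ 1 ≤ ‖w‖ ∧ ‖w‖ ≤ 2} with hH
  have hcov : A ⊆ H ∪ (fun w : E3 => -w) ⁻¹' H := by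
    intro w hw
    rcases le_total ⟪v, w⟫ 0 with h | h
    · exact Or.inl ⟨h, hw.1, hw.2⟩
    · right; simpa [hH] using ⟨h, hw.1, hw.2⟩
  have h := (measure_mono (μ := (volume : Measure E3)) hcov).trans (measure_union_le _ _)
  rw [Measure.measure_preimage_neg, ← two_mul] at h
  rw [ENNReal.ofReal_div_of_pos two_pos, ENNReal.ofReal_toReal hfin]
  refine ENNReal.div_le_of_le_mul ?_
  rw [mul_comm]; simpa using h

lemma rpow_lower (γ x y : ℝ) (hx : 0 < x) (h1 : x ≤ y) (h2 : y ≤ 3 * x) :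
    min 1 (3 ^ γ) * x ^ γ ≤ y ^ γ := by
  have hxγ : 0 < x ^ γ := by positivity
  rcases le_total 0 γ with h | h
  · calc min 1 (3 ^ γ) * x ^ γ ≤ 1 * x ^ γ := by gcongr; exact min_le_left _ _
      _ ≤ y ^ γ := by rw [one_mul]; gcongr
  · calc min 1 (3 ^ γ) * x ^ γ ≤ 3 ^ γ * x ^ γ := by gcongr; exact min_le_right _ _
      _ = (3 * x) ^ γ := by rw [Real.mul_rpow (by norm_num) hx.le]
      _ ≤ y ^ γ := Real.rpow_le_rpow_of_nonpos (by linarith) h2 h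

lemma cosTheta_le_one (v w : E3) (σ : S2) : cosTheta v w σ ≤ 1 := by
  refine div_le_one_of_le₀ ?_ (norm_nonneg _)
  have := real_inner_le_norm (v - w) (σ : E3)
  have hσ : ‖(σ : E3)‖ = 1 := by simp
  rwa [hσ, mul_one] at this

/-- The collision frequency of the Maxwellian is bounded below by a multiple of `⟨v⟩^γ`. -/
lemma frequency_lower (γ : ℝ) (bf : ℝ → ℝ) (hbf : gradCutoff bf) :
    ∃ c : ℝ, 0 < c ∧ ∀ v : E3, ENNReal.ofReal (c * jap v ^ γ) ≤
      ∫⁻ w : E3, ∫⁻ σ : S2, ENNReal.ofReal (‖v - w‖ ^ γ * bf (cosTheta v w σ) * maxw w) := by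
  obtain ⟨-, -, ⟨K, hK, hbK⟩, -⟩ := hbf
  obtain ⟨m, hm, hmass⟩ := hemisphere_mass
  obtain ⟨n, hn, hann⟩ := annulus_mass
  set d : ℝ := (2 * π) ^ (-(3 : ℝ) / 2) * Real.exp (-2) with hd
  have hd0 : 0 < d := by positivity
  set q : ℝ := min 1 (3 ^ γ) with hq
  have hq0 : 0 < q := lt_min one_pos (by positivity)
  refine ⟨q * K * d * m * n, by positivity, fun v => ?_⟩
  have hj := jap_pos v
  set A := {w : E3 | ⟪v, w⟫ ≤ 0 ∧ 1 ≤ ‖w‖ ∧ ‖w‖ ≤ 2} with hA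
  have hAm : MeasurableSet A := by
    have m1 : MeasurableSet {w : E3 | ⟪v, w⟫ ≤ 0} := measurableSet_le (by fun_prop) (by fun_prop)
    have m2 : MeasurableSet {w : E3 | 1 ≤ ‖w‖} := measurableSet_le (by fun_prop) (by fun_prop)
    have m3 : MeasurableSet {w : E3 | ‖w‖ ≤ 2} := measurableSet_le (by fun_prop) (by fun_prop)
    exact m1.inter (m2.inter m3)
  have hin : ∀ w ∈ A, ENNReal.ofReal (q * jap v ^ γ * K * d * m) ≤
      ∫⁻ σ : S2, ENNReal.ofReal (‖v - w‖ ^ γ * bf (cosTheta v w σ) * maxw w) := by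
    rintro w ⟨hw1, hw2, hw3⟩
    -- The obtuse angle and `1 ≤ |w| ≤ 2` give `⟨v⟩ ≤ |v - w| ≤ 3⟨v⟩`, whatever the sign of `γ`.
    have hsq : ‖v - w‖ ^ 2 = ‖v‖ ^ 2 - 2 * ⟪v, w⟫ + ‖w‖ ^ 2 := norm_sub_sq_real v w
    have hlow : jap v ≤ ‖v - w‖ := by
      refine abs_le_of_sq_le_sq' ?_ (norm_nonneg _) |>.2
      rw [jap_sq, hsq]; nlinarith
    have hup : ‖v - w‖ ≤ 3 * jap v := by
      have := norm_sub_le v w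
      have := norm_le_jap v
      have := one_le_jap v
      linarith
    have hr := rpow_lower γ _ _ hj hlow hup
    have hmx : d ≤ maxw w := by
      unfold maxw; rw [hd]; gcongr; nlinarith
    set H := {σ : S2 | 0 ≤ ⟪v - w, (σ : E3)⟫} with hH
    have hHm : MeasurableSet H := measurableSet_le measurable_const (by fun_prop)
    calc ENNReal.ofReal (q * jap v ^ γ * K * d * m)
        = ENNReal.ofReal (q * jap v ^ γ * K * d) * ENNReal.ofReal m :=
          ENNReal.ofReal_mul (by positivity)
      _ ≤ ENNReal.ofReal (q * jap v ^ γ * K * d) * volume H := by gcongr; exact hmass _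
      _ = ∫⁻ _ in H, ENNReal.ofReal (q * jap v ^ γ * K * d) := (setLIntegral_const _ _).symm
      _ ≤ ∫⁻ σ in H, ENNReal.ofReal (‖v - w‖ ^ γ * bf (cosTheta v w σ) * maxw w) := by
          refine setLIntegral_mono' hHm fun σ hσ => ENNReal.ofReal_le_ofReal ?_
          have hb : K ≤ bf (cosTheta v w σ) := (hbK _ ⟨div_nonneg hσ (norm_nonneg _), cosTheta_le_one v w σ⟩).1
          have := hK.le.trans hb
          gcongr
      _ ≤ _ := setLIntegral_le_lintegral _ _
  calc ENNReal.ofReal (q * K * d * m * n * jap v ^ γ)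
      = ENNReal.ofReal (q * jap v ^ γ * K * d * m) * ENNReal.ofReal n := by
        rw [← ENNReal.ofReal_mul (by positivity)]; congr 1; ring
    _ ≤ ENNReal.ofReal (q * jap v ^ γ * K * d * m) * volume A := by gcongr; exact hann v
    _ = ∫⁻ _ in A, ENNReal.ofReal (q * jap v ^ γ * K * d * m) := (setLIntegral_const _ _).symm
    _ ≤ ∫⁻ w in A, ∫⁻ σ : S2,
          ENNReal.ofReal (‖v - w‖ ^ γ * bf (cosTheta v w σ) * maxw w) := setLIntegral_mono' hAm hin
    _ ≤ _ := setLIntegral_le_lintegral _ _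

/-! ### Triple integrals and coercivity -/

/-- The cutoff bound is global because `cosTheta ≤ 1` and `bf` vanishes on negatives. -/
lemma bf_cosTheta_le (bf : ℝ → ℝ) (hbf : gradCutoff bf) :
    ∃ L : ℝ, 0 < L ∧ ∀ v w σ, bf (cosTheta v w σ) ≤ L := by
  obtain ⟨-, -, ⟨K, hK, hbK⟩, hneg⟩ := hbf
  refine ⟨K⁻¹, by positivity, fun v w σ => ?_⟩
  rcases lt_or_ge (cosTheta v w σ) 0 with h | h
  · rw [hneg _ h]; positivity
  · exact (hbK _ ⟨h, cosTheta_le_one v w σ⟩).2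

lemma integral_triple {F : E3 × E3 × S2 → ℝ} (hF : Integrable F) :
    ∫ p, F p = ∫ v : E3, ∫ w : E3, ∫ σ : S2, F (v, w, σ) := by
  rw [Measure.volume_eq_prod] at hF ⊢
  rw [integral_prod F hF]
  refine integral_congr_ae ?_
  filter_upwards [hF.prod_right_ae] with v hv
  rw [Measure.volume_eq_prod] at hv ⊢
  exact integral_prod _ hv

/-- Absolute convergence turns the paired loss operator, an iterated Bochner integral, into an
integral over `ℝ³ × ℝ³ × S²`. -/
lemma loss_eq_triple (γ : ℝ) (bf : ℝ → ℝ) (g h f W1 W2 : E3 → ℝ)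
    (hF : Integrable (fun p : E3 × E3 × S2 =>
      ‖p.1 - p.2.1‖ ^ γ * bf (cosTheta p.1 p.2.1 p.2.2) *
        g p.2.1 * h p.1 * f p.1 * W1 p.1 * W2 p.1)) :
    ∫ v : E3, Qloss γ bf g h v * f v * W1 v * W2 v =
      ∫ p : E3 × E3 × S2, ‖p.1 - p.2.1‖ ^ γ * bf (cosTheta p.1 p.2.1 p.2.2) *
        g p.2.1 * h p.1 * f p.1 * W1 p.1 * W2 p.1 := by
  rw [integral_triple hF]
  simp only [Qloss, ← integral_mul_const, mul_assoc]

/-- Coercivity: the part of the loss term with the Maxwellian in the integrated slot controls the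
weighted norm. -/
lemma loss_lower (γ k a b : ℝ) (bf : ℝ → ℝ) (hbf : gradCutoff bf) :
    ∃ c : ℝ, 0 < c ∧ ∀ f : E3 → ℝ, Measurable f →
      Integrable (fun p : E3 × E3 × S2 =>
        ‖p.1 - p.2.1‖ ^ γ * bf (cosTheta p.1 p.2.1 p.2.2) *
          maxw p.2.1 * f p.1 * f p.1 * jap p.1 ^ (2 * k) * Real.exp (2 * a * jap p.1 ^ b)) →
      Integrable (fun v : E3 =>
        f v ^ 2 * jap v ^ (2 * (k + γ / 2)) * Real.exp (2 * a * jap v ^ b)) →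
      c * expSq (k + γ / 2) a b f ≤
        ∫ v : E3, Qloss γ bf maxw f v * f v * jap v ^ (2 * k) * Real.exp (2 * a * jap v ^ b) := by
  obtain ⟨c, hc, hlow⟩ := frequency_lower γ bf hbf
  refine ⟨c, hc, fun f hf hF hN => ?_⟩
  have hb0 := hbf.2.1
  rw [loss_eq_triple γ bf maxw f f _ (fun v => Real.exp (2 * a * jap v ^ b)) hF]
  have hpos : ∀ p : E3 × E3 × S2, 0 ≤ ‖p.1 - p.2.1‖ ^ γ * bf (cosTheta p.1 p.2.1 p.2.2) *
      maxw p.2.1 * f p.1 * f p.1 * jap p.1 ^ (2 * k) * Real.exp (2 * a * jap p.1 ^ b) := by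
    intro p
    have h1 := hb0 (cosTheta p.1 p.2.1 p.2.2)
    have h2 := maxw_pos p.2.1
    have h3 := jap_pos p.1
    rw [mul_assoc _ (f p.1) (f p.1)]
    have h4 := mul_self_nonneg (f p.1)
    positivity
  have hposN : ∀ v : E3,
      0 ≤ f v ^ 2 * jap v ^ (2 * (k + γ / 2)) * Real.exp (2 * a * jap v ^ b) := by
    intro v
    have := jap_pos v
    positivity
  rw [← ENNReal.ofReal_le_ofReal_iff (integral_nonneg hpos), expSq,
    ofReal_integral_eq_lintegral_ofReal hF (Filter.Eventually.of_forall hpos),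
    ENNReal.ofReal_mul hc.le,
    ofReal_integral_eq_lintegral_ofReal hN (Filter.Eventually.of_forall hposN),
    ← lintegral_const_mul' _ _ ENNReal.ofReal_ne_top]
  have hbm := hbf.1
  have hmeas : Measurable (fun p : E3 × E3 × S2 => ENNReal.ofReal
      (‖p.1 - p.2.1‖ ^ γ * bf (cosTheta p.1 p.2.1 p.2.2) *
      maxw p.2.1 * f p.1 * f p.1 * jap p.1 ^ (2 * k) * Real.exp (2 * a * jap p.1 ^ b))) := by
    unfold cosTheta; fun_prop
  rw [Measure.volume_eq_prod, lintegral_prod _ hmeas.aemeasurable]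
  refine lintegral_mono fun v => ?_
  have hj := jap_pos v
  rw [Measure.volume_eq_prod,
    lintegral_prod _ (by exact (hmeas.comp measurable_prodMk_left).aemeasurable)]
  set W : ℝ := f v * f v * jap v ^ (2 * k) * Real.exp (2 * a * jap v ^ b) with hW
  have hW0 : 0 ≤ W := by
    have h4 := mul_self_nonneg (f v)
    positivity
  have hjp : jap v ^ (2 * (k + γ / 2)) = jap v ^ γ * jap v ^ (2 * k) := by
    rw [← Real.rpow_add hj]; congr 1; ring
  calc ENNReal.ofReal c * ENNReal.ofReal
          (f v ^ 2 * jap v ^ (2 * (k + γ / 2)) * Real.exp (2 * a * jap v ^ b))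
      = ENNReal.ofReal (c * jap v ^ γ) * ENNReal.ofReal W := by
        rw [← ENNReal.ofReal_mul hc.le, ← ENNReal.ofReal_mul (by positivity), hjp, hW]
        congr 1; ring
    _ ≤ (∫⁻ w : E3, ∫⁻ σ : S2,
          ENNReal.ofReal (‖v - w‖ ^ γ * bf (cosTheta v w σ) * maxw w)) * ENNReal.ofReal W := by
        gcongr; exact hlow v
    _ = _ := by
        rw [← lintegral_mul_const' _ _ ENNReal.ofReal_ne_top]
        refine lintegral_congr fun w => ?_
        rw [← lintegral_mul_const' _ _ ENNReal.ofReal_ne_top]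
        refine lintegral_congr fun σ => ?_
        rw [← ENNReal.ofReal_mul' hW0, hW]
        congr 1; ring

/-! ### Upper bound for the cross term -/

/-- First half of the majorant of the cross term: `|v - w|^γ ⟨v⟩⁻⁵ · ⟨w⟩⁵ f(w)²`. -/
def kernP (γ : ℝ) (f : E3 → ℝ) (v w : E3) : ℝ :=
  (‖v - w‖ ^ γ * jap v ^ (-5 : ℝ)) * (f w ^ 2 * jap w ^ (5 : ℝ))

/-- Second half of the majorant of the cross term: `|v - w|^γ ⟨w⟩⁻⁵ · ⟨v⟩⁻⁵ f(v)²`. -/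
def kernR (γ : ℝ) (f : E3 → ℝ) (v w : E3) : ℝ :=
  (‖w - v‖ ^ γ * jap w ^ (-5 : ℝ)) * (f v ^ 2 * jap v ^ (-5 : ℝ))

lemma kernP_nonneg (γ : ℝ) (f : E3 → ℝ) (v w : E3) : 0 ≤ kernP γ f v w := by
  have := jap_pos v
  have := jap_pos w
  unfold kernP
  positivity

lemma kernR_nonneg (γ : ℝ) (f : E3 → ℝ) (v w : E3) : 0 ≤ kernR γ f v w := by
  have := jap_pos v
  have := jap_pos w
  unfold kernR
  positivity

lemma measurable_kernP (γ : ℝ) {f : E3 → ℝ} (hf : Measurable f) :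
    Measurable (fun q : E3 × E3 => ENNReal.ofReal (kernP γ f q.1 q.2)) := by
  unfold kernP; fun_prop

lemma measurable_kernR (γ : ℝ) {f : E3 → ℝ} (hf : Measurable f) :
    Measurable (fun q : E3 × E3 => ENNReal.ofReal (kernR γ f q.1 q.2)) := by
  unfold kernR; fun_prop

/-- The weighted inequality `|f(v) f(w)| ≤ ⟨w⟩⁵ f(w)² + ⟨w⟩⁻⁵ f(v)²`, applied to the integrand of
the cross term. -/
lemma cross_pointwise (γ k a b L M : ℝ) (bf : ℝ → ℝ) (hb0 : ∀ t, 0 ≤ bf t) (hL : 0 < L)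
    (hM : 0 < M) (hbL : ∀ v w σ, bf (cosTheta v w σ) ≤ L)
    (hMb : ∀ v : E3,
      maxw v * jap v ^ (2 * k) * Real.exp (2 * a * jap v ^ b) ≤ M * jap v ^ (-5 : ℝ))
    (f : E3 → ℝ) (v w : E3) (σ : S2) :
    ‖‖v - w‖ ^ γ * bf (cosTheta v w σ) *
      f w * maxw v * f v * jap v ^ (2 * k) * Real.exp (2 * a * jap v ^ b)‖ ≤
      L * M * (kernP γ f v w + kernR γ f v w) := by
  have hv := jap_pos v
  have hw := jap_pos w
  have h1 := hb0 (cosTheta v w σ)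
  have h2 := maxw_pos v
  have hprod : |f w| * |f v| ≤ f w ^ 2 * jap w ^ (5 : ℝ) + f v ^ 2 * jap w ^ (-5 : ℝ) := by
    have hy : 0 < jap w ^ (5 : ℝ) := by positivity
    rw [Real.rpow_neg hw.le, ← sq_abs (f w), ← sq_abs (f v)]
    set y := jap w ^ (5 : ℝ)
    set s := |f w|
    set t := |f v|
    have h0 : 0 ≤ s * t := mul_nonneg (abs_nonneg _) (abs_nonneg _)
    have : s ^ 2 * y + t ^ 2 * y⁻¹ - 2 * (s * t) = (s * y - t) ^ 2 * y⁻¹ := by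
      field_simp; ring
    have h3 : 0 ≤ (s * y - t) ^ 2 * y⁻¹ := by positivity
    linarith
  have habs : ‖‖v - w‖ ^ γ * bf (cosTheta v w σ) *
      f w * maxw v * f v * jap v ^ (2 * k) * Real.exp (2 * a * jap v ^ b)‖ =
      ‖v - w‖ ^ γ * bf (cosTheta v w σ) *
      (maxw v * jap v ^ (2 * k) * Real.exp (2 * a * jap v ^ b)) * (|f w| * |f v|) := by
    have e : ‖v - w‖ ^ γ * bf (cosTheta v w σ) *
      f w * maxw v * f v * jap v ^ (2 * k) * Real.exp (2 * a * jap v ^ b) =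
      ‖v - w‖ ^ γ * bf (cosTheta v w σ) *
      (maxw v * jap v ^ (2 * k) * Real.exp (2 * a * jap v ^ b)) * (f w * f v) := by ring
    rw [e, norm_mul, Real.norm_eq_abs (f w * f v), abs_mul (f w),
      Real.norm_of_nonneg (by positivity)]
  rw [habs]
  calc _ ≤ ‖v - w‖ ^ γ * L * (M * jap v ^ (-5 : ℝ)) *
        (f w ^ 2 * jap w ^ (5 : ℝ) + f v ^ 2 * jap w ^ (-5 : ℝ)) := by
        gcongr ?_ * ?_ * ?_ * ?_
        · exact hbL v w σ
        · exact hMb v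
    _ = _ := by simp only [kernP, kernR, norm_sub_rev w v]; ring

lemma jap_mul_rpow_five (v : E3) : jap v * jap v ^ (5 : ℝ) = jap v ^ (2 * (3 : ℝ)) := by
  rw [← Real.rpow_one_add' (jap_pos v).le (by norm_num)]; norm_num

lemma wSqR_integrand_nonneg (f : E3 → ℝ) (v : E3) : 0 ≤ f v ^ 2 * jap v ^ (2 * (3 : ℝ)) := by
  have := jap_pos v
  positivity

lemma ofReal_wSqR {f : E3 → ℝ}
    (hN : Integrable (fun v : E3 => f v ^ 2 * jap v ^ (2 * (3 : ℝ)))) :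
    ENNReal.ofReal (wSqR 3 f) = ∫⁻ v, ENNReal.ofReal (f v ^ 2 * jap v ^ (2 * (3 : ℝ))) :=
  ofReal_integral_eq_lintegral_ofReal hN (Filter.Eventually.of_forall (wSqR_integrand_nonneg f))

lemma lintegral_kernP_le (γ S : ℝ) (hS : 0 < S)
    (hSb : ∀ w : E3,
      ∫⁻ v : E3, ENNReal.ofReal (‖v - w‖ ^ γ * jap v ^ (-5 : ℝ)) ≤ ENNReal.ofReal (S * jap w))
    (f : E3 → ℝ) (hf : Measurable f)
    (hN : Integrable (fun v : E3 => f v ^ 2 * jap v ^ (2 * (3 : ℝ)))) :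
    ∫⁻ v, ∫⁻ w, ENNReal.ofReal (kernP γ f v w) ≤ ENNReal.ofReal (S * wSqR 3 f) := by
  -- The `v`-integral has to be the inner one for the Schur bound to apply.
  rw [lintegral_lintegral_swap (measurable_kernP γ hf).aemeasurable, ENNReal.ofReal_mul hS.le, ofReal_wSqR hN,
    ← lintegral_const_mul' _ _ ENNReal.ofReal_ne_top]
  refine lintegral_mono fun w => ?_
  have hw := jap_pos w
  simp only [kernP]
  calc _ = (∫⁻ v, ENNReal.ofReal (‖v - w‖ ^ γ * jap v ^ (-5 : ℝ))) *
        ENNReal.ofReal (f w ^ 2 * jap w ^ (5 : ℝ)) := by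
        rw [← lintegral_mul_const' _ _ ENNReal.ofReal_ne_top]
        refine lintegral_congr fun v => ?_
        rw [ENNReal.ofReal_mul' (by positivity)]
    _ ≤ ENNReal.ofReal (S * jap w) * ENNReal.ofReal (f w ^ 2 * jap w ^ (5 : ℝ)) := by
        gcongr; exact hSb w
    _ = _ := by
        rw [← ENNReal.ofReal_mul (by positivity), ← ENNReal.ofReal_mul hS.le, ← jap_mul_rpow_five]
        congr 1; ring

lemma lintegral_kernR_le (γ S : ℝ) (hS : 0 < S)
    (hSb : ∀ w : E3,
      ∫⁻ v : E3, ENNReal.ofReal (‖v - w‖ ^ γ * jap v ^ (-5 : ℝ)) ≤ ENNReal.ofReal (S * jap w))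
    (f : E3 → ℝ) (hN : Integrable (fun v : E3 => f v ^ 2 * jap v ^ (2 * (3 : ℝ)))) :
    ∫⁻ v, ∫⁻ w, ENNReal.ofReal (kernR γ f v w) ≤ ENNReal.ofReal (S * wSqR 3 f) := by
  rw [ENNReal.ofReal_mul hS.le, ofReal_wSqR hN, ← lintegral_const_mul' _ _ ENNReal.ofReal_ne_top]
  refine lintegral_mono fun v => ?_
  have hv := jap_pos v
  simp only [kernR]
  calc _ = (∫⁻ w, ENNReal.ofReal (‖w - v‖ ^ γ * jap w ^ (-5 : ℝ))) *
        ENNReal.ofReal (f v ^ 2 * jap v ^ (-5 : ℝ)) := by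
        rw [← lintegral_mul_const' _ _ ENNReal.ofReal_ne_top]
        refine lintegral_congr fun w => ?_
        rw [ENNReal.ofReal_mul' (by positivity)]
    _ ≤ ENNReal.ofReal (S * jap v) * ENNReal.ofReal (f v ^ 2 * jap v ^ (5 : ℝ)) := by
        gcongr
        · exact hSb v
        · exact one_le_jap v
        · norm_num
    _ = _ := by
        rw [← ENNReal.ofReal_mul (by positivity), ← ENNReal.ofReal_mul hS.le, ← jap_mul_rpow_five]
        congr 1; ring

lemma lintegral_triple_const {G : E3 × E3 → ℝ≥0∞} (hG : Measurable G) :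
    ∫⁻ p : E3 × E3 × S2, G (p.1, p.2.1) =
      (∫⁻ v, ∫⁻ w, G (v, w)) * (volume : Measure S2) Set.univ := by
  have hm : Measurable (fun p : E3 × E3 × S2 => G (p.1, p.2.1)) :=
    hG.comp (measurable_fst.prodMk measurable_snd.fst)
  rw [Measure.volume_eq_prod, lintegral_prod _ hm.aemeasurable,
    ← lintegral_mul_const' _ _ (measure_ne_top _ _)]
  refine lintegral_congr fun v => ?_
  rw [Measure.volume_eq_prod,
    lintegral_prod _ (by exact (hm.comp measurable_prodMk_left).aemeasurable),
    ← lintegral_mul_const' _ _ (measure_ne_top _ _)]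
  refine lintegral_congr fun w => ?_
  simp

/-- Schur test: both halves of the majorant of the cross term are bounded by `‖f‖²_{L²_3}`. -/
lemma lintegral_majorant_le (γ S m : ℝ) (hS : 0 < S) (hm0 : 0 ≤ m)
    (hmv : (volume : Measure S2) Set.univ = ENNReal.ofReal m)
    (hSb : ∀ w : E3,
      ∫⁻ v : E3, ENNReal.ofReal (‖v - w‖ ^ γ * jap v ^ (-5 : ℝ)) ≤ ENNReal.ofReal (S * jap w))
    (f : E3 → ℝ) (hf : Measurable f)
    (hN : Integrable (fun v : E3 => f v ^ 2 * jap v ^ (2 * (3 : ℝ)))) :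
    ∫⁻ p : E3 × E3 × S2, (ENNReal.ofReal (kernP γ f p.1 p.2.1) +
      ENNReal.ofReal (kernR γ f p.1 p.2.1)) ≤ ENNReal.ofReal (2 * S * m * wSqR 3 f) := by
  have hw0 : 0 ≤ wSqR 3 f := integral_nonneg (wSqR_integrand_nonneg f)
  have hPm := measurable_kernP γ hf
  have hRm := measurable_kernR γ hf
  have hPint := lintegral_kernP_le γ S hS hSb f hf hN
  have hRint := lintegral_kernR_le γ S hS hSb f hN
  have hPc : Measurable (fun p : E3 × E3 × S2 => ENNReal.ofReal (kernP γ f p.1 p.2.1)) := by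
    unfold kernP; fun_prop
  have hPt : ∫⁻ p : E3 × E3 × S2, ENNReal.ofReal (kernP γ f p.1 p.2.1) =
      (∫⁻ v, ∫⁻ w, ENNReal.ofReal (kernP γ f v w)) * ENNReal.ofReal m := by
    rw [← hmv]; exact lintegral_triple_const hPm
  have hRt : ∫⁻ p : E3 × E3 × S2, ENNReal.ofReal (kernR γ f p.1 p.2.1) =
      (∫⁻ v, ∫⁻ w, ENNReal.ofReal (kernR γ f v w)) * ENNReal.ofReal m := by
    rw [← hmv]; exact lintegral_triple_const hRm
  rw [lintegral_add_left hPc, hPt, hRt]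
  calc _ ≤ ENNReal.ofReal (S * wSqR 3 f) * ENNReal.ofReal m +
        ENNReal.ofReal (S * wSqR 3 f) * ENNReal.ofReal m := by gcongr
    _ = _ := by
        rw [← ENNReal.ofReal_mul (by positivity), ← ENNReal.ofReal_add (by positivity)
          (by positivity)]
        congr 1; ring

/-- The part of the loss term with `f` in the integrated slot is of lower order: the Maxwellian
absorbs the exponential weight, and a weighted Schur test bounds the remainder. -/
lemma loss_upper (γ k a b : ℝ) (hγ1 : -3 < γ) (hγ2 : γ ≤ 1) (hk : 0 ≤ k) (ha : 0 < a)
    (hb1 : 0 < b) (hb2 : b < 2) (bf : ℝ → ℝ) (hbf : gradCutoff bf) :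
    ∃ C : ℝ, 0 < C ∧ ∀ f : E3 → ℝ, Measurable f →
      Integrable (fun p : E3 × E3 × S2 =>
        ‖p.1 - p.2.1‖ ^ γ * bf (cosTheta p.1 p.2.1 p.2.2) *
          f p.2.1 * maxw p.1 * f p.1 * jap p.1 ^ (2 * k) * Real.exp (2 * a * jap p.1 ^ b)) →
      Integrable (fun v : E3 => f v ^ 2 * jap v ^ (2 * (3 : ℝ))) →
      |∫ v : E3, Qloss γ bf f maxw v * f v * jap v ^ (2 * k) * Real.exp (2 * a * jap v ^ b)| ≤
        C * wSqR 3 f := by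
  obtain ⟨L, hL, hbL⟩ := bf_cosTheta_le bf hbf
  obtain ⟨M, hM, hMb⟩ := maxw_weight_bound k a b hk ha hb1 hb2
  obtain ⟨S, hS, hSb⟩ := schur_bound γ hγ1 hγ2
  have hb0 := hbf.2.1
  obtain ⟨m, hm0, hmv⟩ : ∃ m : ℝ, 0 ≤ m ∧ (volume : Measure S2) Set.univ = ENNReal.ofReal m :=
    ⟨_, ENNReal.toReal_nonneg, (ENNReal.ofReal_toReal (measure_ne_top _ _)).symm⟩
  refine ⟨L * M * (2 * S * m) + 1, by positivity, fun f hf hF hN => ?_⟩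
  have hw0 : 0 ≤ wSqR 3 f := integral_nonneg (wSqR_integrand_nonneg f)
  rw [loss_eq_triple γ bf f maxw f _ (fun v => Real.exp (2 * a * jap v ^ b)) hF,
    ← Real.norm_eq_abs]
  refine (norm_integral_le_lintegral_norm _).trans ?_
  refine ENNReal.toReal_le_of_le_ofReal (by positivity) ?_
  calc _ ≤ ∫⁻ p : E3 × E3 × S2, ENNReal.ofReal (L * M) *
        (ENNReal.ofReal (kernP γ f p.1 p.2.1) + ENNReal.ofReal (kernR γ f p.1 p.2.1)) := by
        refine lintegral_mono fun p => (ENNReal.ofReal_le_ofReal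
          (cross_pointwise γ k a b L M bf hb0 hL hM hbL hMb f p.1 p.2.1 p.2.2)).trans ?_
        rw [ENNReal.ofReal_mul (by positivity),
          ENNReal.ofReal_add (kernP_nonneg γ f _ _) (kernR_nonneg γ f _ _)]
    _ ≤ ENNReal.ofReal (L * M) * ENNReal.ofReal (2 * S * m * wSqR 3 f) := by
        rw [lintegral_const_mul' _ _ ENNReal.ofReal_ne_top]
        gcongr
        exact lintegral_majorant_le γ S m hS hm0 hmv hSb f hf hN
    _ = ENNReal.ofReal (L * M * (2 * S * m) * wSqR 3 f) := by
        rw [← ENNReal.ofReal_mul (by positivity)]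
        congr 1; ring
    _ ≤ _ := ENNReal.ofReal_le_ofReal (by nlinarith)

/-- coercivity of the loss parts with exponential weights. -/
theorem stmt13 (γ k a b : ℝ) (hγ1 : -3 < γ) (hγ2 : γ ≤ 1) (hk : 0 ≤ k) (ha : 0 < a)
    (hb1 : 0 < b) (hb2 : b < 2) (bf : ℝ → ℝ) (hbf : gradCutoff bf) :
    ∃ C₁ C₂ : ℝ, 0 < C₁ ∧ 0 < C₂ ∧ ∀ f : E3 → ℝ, Measurable f →
      -- absolute convergence of the triple integral for (Q⁻(μ,f), f⟨v⟩^{2k}e^{2a⟨v⟩^b})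
      Integrable (fun p : E3 × E3 × S2 =>
        ‖p.1 - p.2.1‖ ^ γ * bf (cosTheta p.1 p.2.1 p.2.2) *
          maxw p.2.1 * f p.1 * f p.1 * jap p.1 ^ (2 * k) * Real.exp (2 * a * jap p.1 ^ b)) →
      -- absolute convergence of the triple integral for (Q⁻(f,μ), f⟨v⟩^{2k}e^{2a⟨v⟩^b})
      Integrable (fun p : E3 × E3 × S2 =>
        ‖p.1 - p.2.1‖ ^ γ * bf (cosTheta p.1 p.2.1 p.2.2) *
          f p.2.1 * maxw p.1 * f p.1 * jap p.1 ^ (2 * k) * Real.exp (2 * a * jap p.1 ^ b)) →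
      -- convergence of the norms on the right-hand side
      Integrable (fun v : E3 =>
        f v ^ 2 * jap v ^ (2 * (k + γ / 2)) * Real.exp (2 * a * jap v ^ b)) →
      Integrable (fun v : E3 => f v ^ 2 * jap v ^ (2 * (3 : ℝ))) →
      -(∫ v : E3, Qloss γ bf maxw f v * f v * jap v ^ (2 * k) * Real.exp (2 * a * jap v ^ b))
          - (∫ v : E3, Qloss γ bf f maxw v * f v * jap v ^ (2 * k) *
              Real.exp (2 * a * jap v ^ b)) ≤
        -C₁ * expSq (k + γ / 2) a b f + C₂ * wSqR 3 f := by
  obtain ⟨c, hc, hlow⟩ := loss_lower γ k a b bf hbf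
  obtain ⟨C, hC, hup⟩ := loss_upper γ k a b hγ1 hγ2 hk ha hb1 hb2 bf hbf
  refine ⟨c, C, hc, hC, fun f hf h1 h2 h3 h4 => ?_⟩
  have e1 := hlow f hf h1 h3
  have e2 := (abs_le.1 (hup f hf h2 h4)).1
  linarith

end
end
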